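/- arXiv:2201.00984 — 4 statements merged into one kernel-verified Lean document; each statement's English description precedes it below -/
import Mathlib

section
/- Let (R, m, k) be a commutative Noetherian local ring and let M be an Ulrich R-module of dimension s. If N is a finitely generated R-module and there exists an integer n ≥ 1 such that Tor_i^R(M, N) = 0 for all n ≤ i ≤ n+s, then the projective dimension of N over R is finite and pd_R N < n+s. -/
open CategoryTheory IsLocalRing

section Prelim

variable (R : Type) [CommRing R]

/-- `Tor_i^R(M, N) = 0`. -/
noncomputable def TorVanish (M N : Type) [AddCommGroup M] [Module R M]
    [AddCommGroup N] [Module R N] (i : ℕ) : Prop :=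
  Subsingleton (((Tor (ModuleCat R) i).obj (ModuleCat.of R M)).obj (ModuleCat.of R N))

/-- `Ext_R^i(M, N) = 0`. -/
noncomputable def ExtVanish (M N : Type) [AddCommGroup M] [Module R M]
    [AddCommGroup N] [Module R N] (i : ℕ) : Prop :=
  Subsingleton (((Ext R (ModuleCat R) i).obj (Opposite.op (ModuleCat.of R M))).obj
    (ModuleCat.of R N))

/-- `pd_R M < n`, expressed by the standard characterization
`Ext_R^i(M, -) = 0` for all `i ≥ n`. -/
def ProjDimLT (M : Type) [AddCommGroup M] [Module R M] (n : ℕ) : Prop :=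
  ∀ (N : ModuleCat R) (i : ℕ), n ≤ i → ExtVanish R M N i

/-- `pd_R M < ∞`. -/
def ProjDimFinite (M : Type) [AddCommGroup M] [Module R M] : Prop :=
  ∃ n, ProjDimLT R M n

/-- `id_R M < n`, expressed by the standard characterization
`Ext_R^i(-, M) = 0` for all `i ≥ n`. -/
def InjDimLT (M : Type) [AddCommGroup M] [Module R M] (n : ℕ) : Prop :=
  ∀ (N : ModuleCat R) (i : ℕ), n ≤ i → ExtVanish R N M i

/-- `id_R M < ∞`. -/
def InjDimFinite (M : Type) [AddCommGroup M] [Module R M] : Prop :=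
  ∃ n, InjDimLT R M n

/-- `M` is a Tor-rigid `R`-module. -/
def TorRigid (M : Type) [AddCommGroup M] [Module R M] : Prop :=
  ∀ (N : ModuleCat R), Module.Finite R N → ∀ n : ℕ, 1 ≤ n → TorVanish R M N n →
    ∀ i : ℕ, n ≤ i → TorVanish R M N i

variable [IsLocalRing R]

/-- The depth of `M`: the supremum of lengths of `M`-regular sequences contained in
the maximal ideal. -/
noncomputable def depth (M : Type) [AddCommGroup M] [Module R M] : ℕ∞ :=
  sSup {n : ℕ∞ | ∃ rs : List R, (∀ x ∈ rs, x ∈ maximalIdeal R) ∧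
    RingTheory.Sequence.IsRegular M rs ∧ (rs.length : ℕ∞) = n}

/-- The dimension of a module, i.e. the Krull dimension of `R ⧸ ann M`. -/
noncomputable def moduleDim (M : Type) [AddCommGroup M] [Module R M] : WithBot ℕ∞ :=
  ringKrullDim (R ⧸ Module.annihilator R M)

/-- `M` is an Ulrich `R`-module of dimension `s` : `M` is nonzero, Cohen–Macaulay of
dimension `s`, and there is an `M`-regular sequence `x₁, …, x_s` in the maximal ideal
with `mM = (x₁, …, x_s)M`. -/
def IsUlrich (M : Type) [AddCommGroup M] [Module R M] (s : ℕ) : Prop :=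
  Nontrivial M ∧ moduleDim R M = (s : ℕ∞) ∧ depth R M = (s : ℕ∞) ∧
  ∃ rs : List R, rs.length = s ∧ (∀ x ∈ rs, x ∈ maximalIdeal R) ∧
    RingTheory.Sequence.IsRegular M rs ∧
    (maximalIdeal R) • (⊤ : Submodule R M) = (Ideal.ofList rs) • ⊤

/-- `R` is a regular local ring: the maximal ideal is generated by `dim R` elements. -/
def IsRegularLocal : Prop :=
  ∃ s : Finset R, Ideal.span (s : Set R) = maximalIdeal R ∧
    (s.card : WithBot ℕ∞) = ringKrullDim R

/-- `R` (of dimension `d`) has minimal multiplicity: there is an `R`-regular sequence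
`x₁, …, x_d` in the maximal ideal `m` with `m² = (x₁, …, x_d)m`. -/
def HasMinimalMultiplicity (d : ℕ) : Prop :=
  ∃ rs : List R, rs.length = d ∧ (∀ x ∈ rs, x ∈ maximalIdeal R) ∧
    RingTheory.Sequence.IsWeaklyRegular R rs ∧
    maximalIdeal R ^ 2 = Ideal.ofList rs * maximalIdeal R

/-- The `n`-th Betti number of `M` over the local ring `R`, i.e. the dimension over the
residue field `k = R ⧸ m` of `Tor_n^R(M, k)` (which is an `m`-torsion module, so we take
the dimension of its reduction mod `m`). -/
noncomputable def betti (M : Type) [AddCommGroup M] [Module R M] (n : ℕ) : ℕ :=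
  Module.finrank (R ⧸ maximalIdeal R)
    ((((Tor (ModuleCat R) n).obj (ModuleCat.of R M)).obj
        (ModuleCat.of R (R ⧸ maximalIdeal R))) ⧸
      (maximalIdeal R • (⊤ : Submodule R
        (((Tor (ModuleCat R) n).obj (ModuleCat.of R M)).obj
          (ModuleCat.of R (R ⧸ maximalIdeal R))))))

end Prelim

/-!
Let `x₁, …, x_s` be an `M`-regular sequence with `𝔪 M = (x₁, …, x_s) M`. For an `M`-regular element
`x`, the long exact sequence of `Tor` along `0 → M → M → M / x M → 0` shows that the vanishing of
`Tor_i(M, N)` for `i = j, j + 1` implies `Tor_{j + 1}(M / x M, N) = 0`. Each element of the sequence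
thus shortens the range of vanishing degrees by one at its lower end, leaving
`Tor_{n + s}(M / (x₁, …, x_s) M, N) = 0`. This quotient is a nonzero vector space over the residue
field `k`, so `k` is a direct summand of it and `Tor_{n + s}(k, N) = 0`. Shifting dimensions along
finite free covers turns this into `Tor₁(k, K) = 0` for an `(n + s - 1)`-th syzygy `K` of `N`; such
a `K` is free.
-/

section DimensionShifting

open Limits

universe v u v' u'

variable {C : Type u} [Category.{v} C] [Abelian C]
  {D : Type u'} [Category.{v'} D] [Abelian D]

/-- The augmentation `P₀ ⟶ X` of a projective resolution, typed with target `X` itself rather than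
the degree `0` term of the complex concentrated in `X`. -/
def augmentation {X : C} (P : ProjectiveResolution X) : P.complex.X 0 ⟶ X := P.π.f 0

theorem d_comp_augmentation {X : C} (P : ProjectiveResolution X) :
    P.complex.d 1 0 ≫ augmentation P = 0 :=
  P.complex_d_comp_π_f_zero

instance {X : C} (P : ProjectiveResolution X) : Epi (augmentation P) :=
  inferInstanceAs (Epi (P.π.f 0))

/-- The complex `⋯ ⟶ P₁ ⟶ P₀ ⟶ S.X₂` obtained by splicing a projective resolution `P` of `S.X₁`
with `S.f : S.X₁ ⟶ S.X₂`. -/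
def spliceComplex (S : ShortComplex C) (P : ProjectiveResolution S.X₁) : ChainComplex C ℕ :=
  P.complex.augment (augmentation P ≫ S.f)
    (by rw [reassoc_of% d_comp_augmentation P, zero_comp])

theorem spliceComplex_d_comp (S : ShortComplex C) (P : ProjectiveResolution S.X₁) :
    (spliceComplex S P).d 1 0 ≫ S.g = 0 := by
  change (augmentation P ≫ S.f) ≫ S.g = 0
  rw [Category.assoc, S.zero, comp_zero]

theorem spliceComplex_exact₀ {S : ShortComplex C} (hS : S.ShortExact)
    (P : ProjectiveResolution S.X₁) :
    (ShortComplex.mk _ _ (spliceComplex_d_comp S P)).Exact := by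
  let toS : ShortComplex.mk _ _ (spliceComplex_d_comp S P) ⟶ S :=
    { τ₁ := augmentation P, τ₂ := 𝟙 S.X₂, τ₃ := 𝟙 S.X₃
      comm₁₂ := (Category.comp_id _).symm
      comm₂₃ := (Category.id_comp _).trans (Category.comp_id _).symm }
  have : Epi toS.τ₁ := inferInstanceAs (Epi (augmentation P))
  have : IsIso toS.τ₂ := inferInstanceAs (IsIso (𝟙 S.X₂))
  have : Mono toS.τ₃ := inferInstanceAs (Mono (𝟙 S.X₃))
  exact (ShortComplex.exact_iff_of_epi_of_isIso_of_mono toS).2 hS.exact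

theorem spliceComplex_exactAt_succ (S : ShortComplex C) [Mono S.f] (P : ProjectiveResolution S.X₁) :
    ∀ n, (spliceComplex S P).ExactAt (n + 1)
  | 0 => by
    rw [HomologicalComplex.exactAt_iff' _ 2 1 0 (by simp) (by simp)]
    let fromP : ShortComplex.mk _ _ P.complex_d_comp_π_f_zero ⟶ (spliceComplex S P).sc' 2 1 0 :=
      { τ₁ := 𝟙 _, τ₂ := 𝟙 _, τ₃ := S.f
        comm₁₂ := (Category.id_comp _).trans (Category.comp_id _).symm
        comm₂₃ := Category.id_comp _ }
    have : Epi fromP.τ₁ := inferInstanceAs (Epi (𝟙 (P.complex.X 1)))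
    have : IsIso fromP.τ₂ := inferInstanceAs (IsIso (𝟙 (P.complex.X 0)))
    have : Mono fromP.τ₃ := inferInstanceAs (Mono S.f)
    exact (ShortComplex.exact_iff_of_epi_of_isIso_of_mono fromP).1 P.exact₀
  | n + 1 => by
    rw [HomologicalComplex.exactAt_iff' _ (n + 3) (n + 2) (n + 1) (by simp) (by simp)]
    exact P.exact_succ n

/-- `spliceComplex S P` as a projective resolution of `S.X₃`, for a short exact sequence `S` with
projective middle term. -/
noncomputable def spliceResolution {S : ShortComplex C} (hS : S.ShortExact) [Projective S.X₂]
    (P : ProjectiveResolution S.X₁) : ProjectiveResolution S.X₃ where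
  complex := spliceComplex S P
  projective
    | 0 => ‹Projective S.X₂›
    | i + 1 => P.projective i
  π := (ChainComplex.toSingle₀Equiv _ _).symm ⟨S.g, spliceComplex_d_comp S P⟩
  quasiIso := ⟨fun n => by
    have := hS.mono_f
    cases n with
    | zero =>
      rw [ChainComplex.quasiIsoAt₀_iff, ShortComplex.quasiIso_iff_of_zeros' _ rfl rfl rfl]
      refine (ShortComplex.exact_and_epi_g_iff_of_iso ?_).2 ⟨spliceComplex_exact₀ hS P, hS.epi_g⟩
      exact ShortComplex.isoMk (Iso.refl _) (Iso.refl _) (Iso.refl _)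
        ((Category.id_comp _).trans (Category.comp_id _).symm)
        ((Category.id_comp _).trans ((ChainComplex.toSingle₀Equiv_symm_apply_f_zero _
          (spliceComplex_d_comp S P)).symm.trans (Category.comp_id _).symm))
    | succ n =>
      rw [quasiIsoAt_iff_exactAt' _ _ (ChainComplex.exactAt_succ_single_obj _ _)]
      exact spliceComplex_exactAt_succ S P n⟩

theorem isZero_leftDerived_succ_iff_exact [HasProjectiveResolutions C] (F : C ⥤ D) [F.Additive]
    {X : C} (P : ProjectiveResolution X) (n : ℕ) :
    IsZero ((F.leftDerived (n + 1)).obj X) ↔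
      ((P.complex.sc' (n + 2) (n + 1) n).map F).Exact := by
  rw [(P.isoLeftDerivedObj F (n + 1)).isZero_iff, HomologicalComplex.homologyFunctor_obj,
    ← HomologicalComplex.exactAt_iff_isZero_homology,
    HomologicalComplex.exactAt_iff' _ (n + 2) (n + 1) n (by simp) (by simp)]
  rfl

theorem isZero_leftDerived_succ_succ_iff [HasProjectiveResolutions C] (F : C ⥤ D) [F.Additive]
    {S : ShortComplex C} (hS : S.ShortExact) [Projective S.X₂] (n : ℕ) :
    IsZero ((F.leftDerived (n + 2)).obj S.X₃) ↔ IsZero ((F.leftDerived (n + 1)).obj S.X₁) := by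
  let P := projectiveResolution S.X₁
  rw [isZero_leftDerived_succ_iff_exact F (spliceResolution hS P),
    isZero_leftDerived_succ_iff_exact F P]
  rfl

theorem mono_of_exact_comp {W X Y Z : C} {f : W ⟶ X} {π : X ⟶ Y} [Epi π] {i : Y ⟶ Z}
    (hπ : f ≫ π = 0) (w : f ≫ π ≫ i = 0) (hex : (ShortComplex.mk f (π ≫ i) w).Exact) :
    Mono i := by
  refine Preadditive.mono_of_cancel_zero _ fun {A} a ha => ?_
  obtain ⟨A₁, p, _, b, hb⟩ := surjective_up_to_refinements_of_epi π a
  obtain ⟨A₂, q, _, c, hc⟩ := hex.exact_up_to_refinements b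
    (by rw [← reassoc_of% hb, ha, comp_zero])
  have hbπ : b ≫ π = 0 := by
    rw [← cancel_epi q, reassoc_of% hc, hπ, comp_zero, comp_zero]
  rw [← cancel_epi p, hb, hbπ, comp_zero]

theorem mono_map_of_isZero_leftDerived_one [HasProjectiveResolutions C] (F : C ⥤ D) [F.Additive]
    [F.PreservesEpimorphisms] {S : ShortComplex C} (hS : S.ShortExact) [Projective S.X₂]
    (h : IsZero ((F.leftDerived 1).obj S.X₃)) : Mono (F.map S.f) := by
  let P := projectiveResolution S.X₁
  have hπ : F.map (P.complex.d 1 0) ≫ F.map (augmentation P) = 0 := by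
    rw [← F.map_comp, d_comp_augmentation, F.map_zero]
  have w : F.map (P.complex.d 1 0) ≫ F.map (augmentation P) ≫ F.map S.f = 0 := by
    rw [reassoc_of% hπ, zero_comp]
  have hex : (ShortComplex.mk _ (F.map (augmentation P ≫ S.f)) (by rwa [F.map_comp])).Exact :=
    (isZero_leftDerived_succ_iff_exact F (spliceResolution hS P) 0).1 h
  simp only [F.map_comp] at hex
  exact mono_of_exact_comp hπ w hex

theorem isZero_leftDerived_succ_of_shortExact [HasProjectiveResolutions C] {F G H : C ⥤ D}
    [F.Additive] [G.Additive] [H.Additive] {α : F ⟶ G} {β : G ⟶ H} (w : ∀ X, α.app X ≫ β.app X = 0)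
    (hαβ : ∀ (X : C) [Projective X], (ShortComplex.mk (α.app X) (β.app X) (w X)).ShortExact)
    (X : C) (n : ℕ) (hF : IsZero ((F.leftDerived n).obj X))
    (hG : IsZero ((G.leftDerived (n + 1)).obj X)) : IsZero ((H.leftDerived (n + 1)).obj X) := by
  let P := projectiveResolution X
  let S : ShortComplex (ChainComplex D ℕ) := .mk
    ((NatTrans.mapHomologicalComplex α _).app P.complex)
    ((NatTrans.mapHomologicalComplex β _).app P.complex) (by ext; exact w _)
  have hS : S.ShortExact :=
    HomologicalComplex.shortExact_of_degreewise_shortExact _ fun i => hαβ (P.complex.X i)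
  refine IsZero.of_iso ?_ (P.isoLeftDerivedObj H (n + 1))
  exact (hS.homology_exact₃ (n + 1) n rfl).isZero_X₂
    (hG.of_iso (P.isoLeftDerivedObj G (n + 1)).symm |>.eq_zero_of_src _)
    (hF.of_iso (P.isoLeftDerivedObj F n).symm |>.eq_zero_of_tgt _)

end DimensionShifting

section Tor

open Limits

universe u

open MonoidalCategory in
theorem isZero_tor_succ_of_shortExact {R : Type u} [CommRing R] {S : ShortComplex (ModuleCat.{u} R)}
    (hS : S.ShortExact) (N : ModuleCat.{u} R) (n : ℕ)
    (h₁ : IsZero (((Tor (ModuleCat R) n).obj S.X₁).obj N))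
    (h₂ : IsZero (((Tor (ModuleCat R) (n + 1)).obj S.X₂).obj N)) :
    IsZero (((Tor (ModuleCat R) (n + 1)).obj S.X₃).obj N) := by
  refine isZero_leftDerived_succ_of_shortExact (α := (tensoringLeft _).map S.f)
    (β := (tensoringLeft _).map S.g) (fun P => (S.map (tensorRight P)).zero) (fun P _ => ?_)
    N n h₁ h₂
  have : Module.Projective R P := (IsProjective.iff_projective P).2 ‹_›
  exact hS.map_of_exact (tensorRight P)

variable {R : Type} [CommRing R] {M N : Type} [AddCommGroup M] [Module R M] [AddCommGroup N]
  [Module R N]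

theorem torVanish_iff_isZero {i : ℕ} : TorVanish R M N i ↔
    IsZero (((Tor (ModuleCat R) i).obj (ModuleCat.of R M)).obj (ModuleCat.of R N)) :=
  ModuleCat.isZero_iff_subsingleton.symm

theorem TorVanish.of_retract {L : Type} [AddCommGroup L] [Module R L] {i : ℕ}
    (h : TorVanish R M N i) (j : L →ₗ[R] M) (p : M →ₗ[R] L) (hpj : p ∘ₗ j = LinearMap.id) :
    TorVanish R L N i := by
  let r : Retract (ModuleCat.of R L) (ModuleCat.of R M) :=
    { i := ModuleCat.ofHom j, r := ModuleCat.ofHom p, retract := ModuleCat.hom_ext hpj }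
  rw [torVanish_iff_isZero] at h ⊢
  exact h.of_mono (r.map (Tor (ModuleCat R) i ⋙ (evaluation _ _).obj (ModuleCat.of R N))).i

theorem TorVanish.of_linearEquiv {L : Type} [AddCommGroup L] [Module R L] {i : ℕ}
    (h : TorVanish R M N i) (e : L ≃ₗ[R] M) : TorVanish R L N i :=
  h.of_retract e.toLinearMap e.symm.toLinearMap e.symm_comp

theorem TorVanish.quotSMulTop {r : R} (hr : IsSMulRegular M r) {n : ℕ} (h : TorVanish R M N n)
    (h' : TorVanish R M N (n + 1)) : TorVanish R (QuotSMulTop r M) N (n + 1) :=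
  torVanish_iff_isZero.2 (isZero_tor_succ_of_shortExact
    (IsSMulRegular.smulShortComplex_shortExact (M := ModuleCat.of R M) hr) _ n
    (torVanish_iff_isZero.1 h) (torVanish_iff_isZero.1 h'))

theorem torVanish_quotient_ofList {rs : List R} (hrs : RingTheory.Sequence.IsWeaklyRegular M rs)
    {n : ℕ} (h : ∀ i, n ≤ i → i ≤ n + rs.length → TorVanish R M N i) :
    TorVanish R (M ⧸ (Ideal.ofList rs • ⊤ : Submodule R M)) N (n + rs.length) := by
  induction rs generalizing M n with
  | nil =>
    exact (h n le_rfl le_rfl).of_linearEquiv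
      (Submodule.quotEquivOfEqBot _ (by rw [Ideal.ofList_nil, Submodule.bot_smul]))
  | cons r rs ih =>
    obtain ⟨hr, hrs⟩ := (RingTheory.Sequence.isWeaklyRegular_cons_iff M r rs).1 hrs
    simp only [List.length_cons] at h ⊢
    rw [← add_assoc, Nat.add_right_comm]
    refine (ih hrs (n := n + 1) fun i hi hi' => ?_).of_linearEquiv
      (Submodule.quotOfListConsSMulTopEquivQuotSMulTopInner M r rs)
    obtain ⟨i, rfl⟩ := Nat.exists_eq_add_of_le' (Nat.one_le_of_lt hi)
    exact .quotSMulTop hr (h _ (by omega) (by omega)) (h _ (by omega) (by omega))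

theorem TorVanish.residueField [IsLocalRing R] [Nontrivial M]
    (hM : Module.IsTorsionBySet R M (maximalIdeal R : Set R)) {i : ℕ} (h : TorVanish R M N i) :
    TorVanish R (ResidueField R) N i := by
  let _ : Module (ResidueField R) M := hM.module
  have : IsScalarTower R (ResidueField R) M := hM.isScalarTower
  obtain ⟨x, hx⟩ := exists_ne (0 : M)
  obtain ⟨p, hp⟩ := (LinearMap.toSpanSingleton (ResidueField R) M x).exists_leftInverse_of_injective
    (LinearMap.ker_toSpanSingleton _ hx)
  exact h.of_retract ((LinearMap.toSpanSingleton (ResidueField R) M x).restrictScalars R)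
    (p.restrictScalars R) (LinearMap.ext fun y => DFunLike.congr_fun hp y)

end Tor

section ProjectiveDimension

open Limits

variable {R : Type} [CommRing R] {N : Type} [AddCommGroup N] [Module R N]

theorem extVanish_iff_isZero {Y : ModuleCat R} {i : ℕ} : ExtVanish R N Y i ↔
    IsZero (((Ext R (ModuleCat R) i).obj (.op (ModuleCat.of R N))).obj Y) :=
  ModuleCat.isZero_iff_subsingleton.symm

theorem projDimLT_one_of_projective [Module.Projective R N] : ProjDimLT R N 1 := by
  intro Y i hi
  obtain ⟨i, rfl⟩ := Nat.exists_eq_add_of_le' hi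
  have : Projective (ModuleCat.of R N) := inferInstance
  exact extVanish_iff_isZero.2 (isZero_Ext_succ_of_projective _ _ i)

variable {F : Type} [AddCommGroup F] [Module R F] [Module.Projective R F] {f : F →ₗ[R] N}

theorem ProjDimLT.of_ker (hf : Function.Surjective f) {n : ℕ}
    (h : ProjDimLT R (LinearMap.ker f) (n + 1)) : ProjDimLT R N (n + 2) := by
  intro Y i hi
  obtain ⟨i, rfl⟩ := Nat.exists_eq_add_of_le' (Nat.le_of_add_left_le hi)
  have hK := extVanish_iff_isZero.1 (h Y (i + 1) (by omega))
  have : Projective f.shortComplexKer.X₂ := inferInstanceAs (Projective (ModuleCat.of R F))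
  -- `Ext` is defined by left deriving the opposite of `Hom(-, Y)`, so the shift for left derived
  -- functors applies up to `op`.
  exact extVanish_iff_isZero.2 ((isZero_leftDerived_succ_succ_iff
    ((linearYoneda R (ModuleCat R)).obj Y).rightOp (LinearMap.shortExact_shortComplexKer hf) i).2
      hK.op).unop

theorem TorVanish.ker {M : Type} [AddCommGroup M] [Module R M] (hf : Function.Surjective f) {n : ℕ}
    (h : TorVanish R M N (n + 2)) : TorVanish R M (LinearMap.ker f) (n + 1) := by
  have : Projective f.shortComplexKer.X₂ := inferInstanceAs (Projective (ModuleCat.of R F))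
  exact torVanish_iff_isZero.2 ((isZero_leftDerived_succ_succ_iff _
    (LinearMap.shortExact_shortComplexKer hf) n).1 (torVanish_iff_isZero.1 h))

theorem TorVanish.injective_lTensor_subtype_ker {M : Type} [AddCommGroup M] [Module R M]
    (hf : Function.Surjective f) (h : TorVanish R M N 1) :
    Function.Injective ((LinearMap.ker f).subtype.lTensor M) := by
  have : Projective f.shortComplexKer.X₂ := inferInstanceAs (Projective (ModuleCat.of R F))
  let M' := ModuleCat.of R M
  have : ((MonoidalCategory.tensoringLeft (ModuleCat R)).obj M').PreservesEpimorphisms :=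
    Functor.preservesEpimorphisms_of_adjunction (ihom.adjunction M')
  exact (ModuleCat.mono_iff_injective _).1 (mono_map_of_isZero_leftDerived_one
    ((MonoidalCategory.tensoringLeft (ModuleCat R)).obj M')
    (LinearMap.shortExact_shortComplexKer hf) (torVanish_iff_isZero.1 h))

theorem TorVanish.projDimLT [IsNoetherianRing R] [IsLocalRing R] [Module.Finite R N] {n : ℕ}
    (h : TorVanish R (ResidueField R) N (n + 1)) : ProjDimLT R N (n + 1) := by
  induction n generalizing N with
  | zero =>
    obtain ⟨F, _, _, _, _, f, hf⟩ := Module.exists_finite_presentation R N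
    have : Module.Free R N := Module.free_of_lTensor_residueField_injective
      (LinearMap.ker f).subtype f hf (LinearMap.exact_subtype_ker_map f)
      (h.injective_lTensor_subtype_ker hf)
    exact projDimLT_one_of_projective
  | succ n ih =>
    obtain ⟨F, _, _, _, _, f, hf⟩ := Module.exists_finite_presentation R N
    exact .of_ker hf (ih (h.ker hf))

end ProjectiveDimension

theorem statement1_general {R : Type} [CommRing R] [IsNoetherianRing R] [IsLocalRing R]
    {M N : Type} [AddCommGroup M] [Module R M] [AddCommGroup N] [Module R N] [Module.Finite R N]
    {rs : List R} (hrs : RingTheory.Sequence.IsRegular M rs)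
    (hmax : maximalIdeal R • (⊤ : Submodule R M) ≤ Ideal.ofList rs • ⊤) {n : ℕ} (hn : 1 ≤ n)
    (hvan : ∀ i, n ≤ i → i ≤ n + rs.length → TorVanish R M N i) :
    ProjDimFinite R N ∧ ProjDimLT R N (n + rs.length) := by
  have hquot := torVanish_quotient_ofList hrs.toIsWeaklyRegular hvan
  have : Nontrivial (M ⧸ (Ideal.ofList rs • ⊤ : Submodule R M)) :=
    Submodule.Quotient.nontrivial_iff.2 hrs.top_ne_smul.symm
  have htors : Module.IsTorsionBySet R (M ⧸ (Ideal.ofList rs • ⊤ : Submodule R M))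
      (maximalIdeal R : Set R) := by
    rw [Module.isTorsionBySet_quotient_iff]
    exact fun m r hr => hmax (Submodule.smul_mem_smul hr trivial)
  obtain ⟨m, hm⟩ := Nat.exists_eq_add_of_le' (hn.trans (Nat.le_add_right n rs.length))
  rw [hm] at hquot ⊢
  have hpd := (hquot.residueField htors).projDimLT
  exact ⟨⟨_, hpd⟩, hpd⟩

theorem statement1 (R : Type) [CommRing R] [IsNoetherianRing R] [IsLocalRing R]
    (M : Type) [AddCommGroup M] [Module R M] [Module.Finite R M]
    (s : ℕ) (hM : IsUlrich R M s)
    (N : Type) [AddCommGroup N] [Module R N] [Module.Finite R N]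
    (n : ℕ) (hn : 1 ≤ n)
    (hvan : ∀ i : ℕ, n ≤ i → i ≤ n + s → TorVanish R M N i) :
    ProjDimFinite R N ∧ ProjDimLT R N (n + s) := by
  obtain ⟨-, -, -, rs, rfl, -, hrs, hmax⟩ := hM
  exact statement1_general hrs hmax.le hn hvan
end

section
/- Let (R, m, k) be a commutative Noetherian local ring and let M be an Ulrich R-module of dimension s. If N is a finitely generated R-module and there exists an integer n ≥ 1 with n + s ≥ depth_R N such that Ext_R^i(M, N) = 0 for all n ≤ i ≤ n+s, then N has finite injective dimension over R. -/
open CategoryTheory IsLocalRing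

/-!
Write `k` for the residue field. Since `M ⧸ (x₁, …, xₛ)M = M ⧸ mM` is a nonzero `k`-vector space,
the vanishing of `Ext^i(M, N)` for `n ≤ i ≤ n + s` descends along the regular sequence to
`Ext^{n+s}(k, N) = 0`. As `depth N ≤ n + s`, some earlier `Ext^i(k, N)` is nonzero, so there is
`a < n + s` with `Ext^a(k, N) ≠ 0 = Ext^{a+1}(k, N)`. It suffices to show that every vanishing
beyond such a gap propagates: the groups `Ext^j(k, N)` then vanish for all `j ≥ n + s`, which bounds
the injective dimension of `N`.

For the propagation, let `0 → N → E⁰ → E¹ → ⋯` be an injective resolution with cosyzygies `Ωʲ`,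
let `Γ` denote `m`-power torsion, and let `a ≤ p` with `Ext^{p+1}(k, N) = 0`. A class in
`Ext^{p+2}(k, N)` is represented by a map `z : k → Ωᵖ⁺²`. Let `D` be the image of `ΓEᵖ⁺¹` in `Eᵖ⁺²`.
* The quotients `E ⧸ ΓE` are invisible to `Ext(-, N̂)`, where `N̂` is the `m`-adic completion, and
  `Ext(k, N̂) = Ext(k, N)`. Hence `k → Ωᵖ⁺² → Eᵖ⁺² ⧸ D` induces zero on `Ext^a(-, N̂)`.
* If this composite were injective, the long exact sequence of its cokernel would turn this into
  `Ext^a(k, N) = 0`. So it is zero, that is, `z` takes values in the image of `ΓEᵖ⁺¹`.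
* As `Ext^{p+1}(k, N) = 0`, also `Ext^1(T, Ωᵖ) = 0` for every `m`-power torsion `T`, and this splits
  `ΓEᵖ⁺¹ → Ωᵖ⁺²` over its image. So `z` lifts to `Eᵖ⁺¹` and its class vanishes.
-/

universe w u

section ExtVanishing

variable {C : Type*} [Category* C] [Abelian C] [HasExt.{w} C] {X Y : C} {n : ℕ}

theorem subsingleton_ext_left_of_retract {X' : C} (r : Retract X X')
    (h : Subsingleton (Abelian.Ext X' Y n)) : Subsingleton (Abelian.Ext X Y n) := by
  refine subsingleton_of_forall_eq 0 fun x ↦ ?_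
  calc
    x = (Abelian.Ext.mk₀ (r.i ≫ r.r)).comp x (zero_add n) := by simp
    _ = (Abelian.Ext.mk₀ r.i).comp ((Abelian.Ext.mk₀ r.r).comp x (zero_add n)) (zero_add n) :=
      (Abelian.Ext.mk₀_comp_mk₀_assoc _ _ _).symm
    _ = 0 := by rw [h.elim ((Abelian.Ext.mk₀ r.r).comp x (zero_add n)) 0, Abelian.Ext.comp_zero]

theorem subsingleton_ext_left_of_isZero (hX : Limits.IsZero X) :
    Subsingleton (Abelian.Ext X Y n) := by
  refine subsingleton_of_forall_eq 0 fun x ↦ ?_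
  rw [← Abelian.Ext.mk₀_id_comp x, hX.eq_of_src (𝟙 X) 0, Abelian.Ext.mk₀_zero,
    Abelian.Ext.zero_comp]

theorem subsingleton_ext_right_of_isZero (hY : Limits.IsZero Y) :
    Subsingleton (Abelian.Ext X Y n) := by
  refine subsingleton_of_forall_eq 0 fun x ↦ ?_
  rw [← Abelian.Ext.comp_mk₀_id x, hY.eq_of_src (𝟙 Y) 0, Abelian.Ext.mk₀_zero,
    Abelian.Ext.comp_zero]

variable {S : ShortComplex C} (hS : S.ShortExact)
include hS

theorem subsingleton_ext_X₁_left_of_forall_comp_eq_zero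
    (h₂ : ∀ x : Abelian.Ext S.X₂ Y n, (Abelian.Ext.mk₀ S.f).comp x (zero_add n) = 0)
    (h₃ : Subsingleton (Abelian.Ext S.X₃ Y (n + 1))) : Subsingleton (Abelian.Ext S.X₁ Y n) := by
  refine subsingleton_of_forall_eq 0 fun x ↦ ?_
  obtain ⟨y, rfl⟩ := Abelian.Ext.contravariant_sequence_exact₁ hS _ x (add_comm 1 n)
    (h₃.elim _ _)
  exact h₂ y

theorem subsingleton_ext_X₂_left (h₁ : Subsingleton (Abelian.Ext S.X₁ Y n))
    (h₃ : Subsingleton (Abelian.Ext S.X₃ Y n)) : Subsingleton (Abelian.Ext S.X₂ Y n) := by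
  refine subsingleton_of_forall_eq 0 fun x ↦ ?_
  obtain ⟨y, rfl⟩ := Abelian.Ext.contravariant_sequence_exact₂ hS _ x (h₁.elim _ _)
  rw [h₃.elim y 0, Abelian.Ext.comp_zero]

theorem subsingleton_ext_X₃_left (h₁ : Subsingleton (Abelian.Ext S.X₁ Y n))
    (h₂ : Subsingleton (Abelian.Ext S.X₂ Y (n + 1))) :
    Subsingleton (Abelian.Ext S.X₃ Y (n + 1)) := by
  refine subsingleton_of_forall_eq 0 fun x ↦ ?_
  obtain ⟨y, rfl⟩ := Abelian.Ext.contravariant_sequence_exact₃ hS _ x (h₂.elim _ _)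
    (add_comm 1 n)
  rw [h₁.elim y 0, Abelian.Ext.comp_zero]

theorem subsingleton_ext_zero_X₁_right (h₂ : Subsingleton (Abelian.Ext X S.X₂ 0)) :
    Subsingleton (Abelian.Ext X S.X₁ 0) := by
  have := hS.mono_f
  rw [Abelian.Ext.homEquiv₀.subsingleton_congr] at h₂ ⊢
  exact ⟨fun a b ↦ (cancel_mono S.f).1 (h₂.elim _ _)⟩

theorem subsingleton_ext_X₁_right (h₂ : Subsingleton (Abelian.Ext X S.X₂ (n + 1)))
    (h₃ : Subsingleton (Abelian.Ext X S.X₃ n)) : Subsingleton (Abelian.Ext X S.X₁ (n + 1)) := by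
  refine subsingleton_of_forall_eq 0 fun x ↦ ?_
  obtain ⟨y, rfl⟩ := Abelian.Ext.covariant_sequence_exact₁ _ hS x (h₂.elim _ _) rfl
  rw [h₃.elim y 0, Abelian.Ext.zero_comp]

theorem subsingleton_ext_X₂_right (h₁ : Subsingleton (Abelian.Ext X S.X₁ n))
    (h₃ : Subsingleton (Abelian.Ext X S.X₃ n)) : Subsingleton (Abelian.Ext X S.X₂ n) := by
  refine subsingleton_of_forall_eq 0 fun x ↦ ?_
  obtain ⟨y, rfl⟩ := Abelian.Ext.covariant_sequence_exact₂ _ hS x (h₃.elim _ _)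
  rw [h₁.elim y 0, Abelian.Ext.zero_comp]

theorem subsingleton_ext_X₃_right (h₁ : Subsingleton (Abelian.Ext X S.X₁ (n + 1)))
    (h₂ : Subsingleton (Abelian.Ext X S.X₂ n)) : Subsingleton (Abelian.Ext X S.X₃ n) := by
  refine subsingleton_of_forall_eq 0 fun x ↦ ?_
  obtain ⟨y, rfl⟩ := Abelian.Ext.covariant_sequence_exact₃ _ hS x rfl (h₁.elim _ _)
  rw [h₂.elim y 0, Abelian.Ext.zero_comp]

theorem exists_extension_of_subsingleton_ext_one (h : Subsingleton (Abelian.Ext S.X₃ Y 1))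
    (φ : S.X₁ ⟶ Y) : ∃ ψ : S.X₂ ⟶ Y, S.f ≫ ψ = φ := by
  obtain ⟨y, hy⟩ := Abelian.Ext.contravariant_sequence_exact₁ hS _ (Abelian.Ext.mk₀ φ)
    (add_zero 1) (h.elim _ _)
  obtain ⟨ψ, rfl⟩ := (Abelian.Ext.mk₀_bijective _ _).2 y
  exact ⟨ψ, (Abelian.Ext.mk₀_bijective _ _).1 (by rw [← hy, Abelian.Ext.mk₀_comp_mk₀])⟩

theorem exists_lift_of_subsingleton_ext_one (h : Subsingleton (Abelian.Ext X S.X₁ 1))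
    (φ : X ⟶ S.X₃) : ∃ ψ : X ⟶ S.X₂, ψ ≫ S.g = φ := by
  obtain ⟨y, hy⟩ := Abelian.Ext.covariant_sequence_exact₃ _ hS (Abelian.Ext.mk₀ φ)
    (zero_add 1) (h.elim _ _)
  obtain ⟨ψ, rfl⟩ := (Abelian.Ext.mk₀_bijective _ _).2 y
  exact ⟨ψ, (Abelian.Ext.mk₀_bijective _ _).1 (by rw [← hy, Abelian.Ext.mk₀_comp_mk₀])⟩

theorem subsingleton_ext_one_X₁_right_of_forall_exists_lift
    (h₂ : Subsingleton (Abelian.Ext X S.X₂ 1))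
    (hlift : ∀ φ : X ⟶ S.X₃, ∃ ψ : X ⟶ S.X₂, ψ ≫ S.g = φ) :
    Subsingleton (Abelian.Ext X S.X₁ 1) := by
  refine subsingleton_of_forall_eq 0 fun x ↦ ?_
  obtain ⟨y, rfl⟩ := Abelian.Ext.covariant_sequence_exact₁ _ hS x (h₂.elim _ _) (zero_add 1)
  obtain ⟨φ, rfl⟩ := (Abelian.Ext.mk₀_bijective _ _).2 y
  obtain ⟨ψ, rfl⟩ := hlift φ
  rw [← Abelian.Ext.mk₀_comp_mk₀_assoc, hS.comp_extClass, Abelian.Ext.comp_zero]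

theorem mk₀_comp_eq_zero_of_kernel_lift {Q Z : C} {p : S.X₂ ⟶ Q} {g : Q ⟶ Z} {f : S.X₃ ⟶ Z}
    (hf : S.g ≫ f = p ≫ g) (hQ : Subsingleton (Abelian.Ext Q Y (n + 1)))
    (hker : ∀ (h : S.X₁ ⟶ Limits.kernel g) (y : Abelian.Ext (Limits.kernel g) Y n),
      h ≫ Limits.kernel.ι g = S.f ≫ p → (Abelian.Ext.mk₀ h).comp y (zero_add n) = 0)
    (x : Abelian.Ext Z Y (n + 1)) : (Abelian.Ext.mk₀ f).comp x (zero_add _) = 0 := by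
  have := hS.epi_g
  let T : ShortComplex C := .mk (Limits.kernel.ι g) (Limits.cokernel.π (Limits.kernel.ι g))
    (Limits.cokernel.condition _)
  have hT : T.ShortExact := { exact := ShortComplex.exact_cokernel _ }
  let gbar : T.X₃ ⟶ Z := Limits.cokernel.desc _ g (Limits.kernel.condition g)
  let h : S.X₁ ⟶ T.X₁ := Limits.kernel.lift g (S.f ≫ p) (by
    rw [Category.assoc, ← hf, S.zero_assoc, Limits.zero_comp])
  have hh : h ≫ T.f = S.f ≫ p := Limits.kernel.lift_ι _ _ _
  have hp : S.f ≫ p ≫ T.g = 0 := by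
    rw [← Category.assoc, ← hh, Category.assoc, T.zero, Limits.comp_zero]
  let φ : S ⟶ T := { τ₁ := h, τ₂ := p, τ₃ := hS.exact.desc (p ≫ T.g) hp, comm₁₂ := hh }
  have hφ : φ.τ₃ ≫ gbar = f := by
    rw [← cancel_epi S.g, ← Category.assoc, ← φ.comm₂₃, Category.assoc, hf]
    congr 1
    exact Limits.cokernel.π_desc _ _ _
  obtain ⟨y, hy⟩ := Abelian.Ext.contravariant_sequence_exact₃ hT Y
    ((Abelian.Ext.mk₀ gbar).comp x (zero_add _)) (hQ.elim _ _) (add_comm 1 n)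
  rw [← hφ, ← Abelian.Ext.mk₀_comp_mk₀_assoc, ← hy,
    ← Abelian.Ext.comp_assoc _ _ _ (zero_add 1) (add_comm 1 n) (by omega),
    ← hS.extClass_naturality hT φ,
    Abelian.Ext.comp_assoc _ _ _ (add_zero 1) (zero_add n) (by omega), hker h y hh,
    Abelian.Ext.comp_zero]

end ExtVanishing

section Cosyzygy

variable {C : Type*} [Category* C] [Abelian C] [EnoughInjectives C]

/-- The `j`-th cosyzygy of `N` in the injective resolution built from the chosen embeddings
`Injective.ι`. -/
noncomputable def cosyzygy (N : C) : ℕ → C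
  | 0 => N
  | j + 1 => Limits.cokernel (Injective.ι (cosyzygy N j))

/-- The short exact sequence `0 ⟶ Ωʲ N ⟶ Eʲ ⟶ Ωʲ⁺¹ N ⟶ 0` with `Eʲ` injective. -/
noncomputable def cosyzygyShortComplex (N : C) (j : ℕ) : ShortComplex C where
  X₁ := cosyzygy N j
  X₂ := Injective.under (cosyzygy N j)
  X₃ := cosyzygy N (j + 1)
  f := Injective.ι (cosyzygy N j)
  g := Limits.cokernel.π (Injective.ι (cosyzygy N j))
  zero := Limits.cokernel.condition _

theorem cosyzygyShortComplex_shortExact (N : C) (j : ℕ) :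
    (cosyzygyShortComplex N j).ShortExact where
  exact := ShortComplex.exact_cokernel _
  mono_f := inferInstanceAs (Mono (Injective.ι (cosyzygy N j)))
  epi_g := inferInstanceAs (Epi (Limits.cokernel.π (Injective.ι (cosyzygy N j))))

instance (N : C) (j : ℕ) : Injective (cosyzygyShortComplex N j).X₂ :=
  inferInstanceAs (Injective (Injective.under _))

theorem subsingleton_ext_cosyzygy_iff [HasExt.{w} C] (X N : C) (i j : ℕ) :
    Subsingleton (Abelian.Ext X (cosyzygy N j) (i + 1)) ↔
      Subsingleton (Abelian.Ext X N (i + j + 1)) := by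
  induction j generalizing i with
  | zero => rfl
  | succ j ih =>
    rw [show i + (j + 1) + 1 = i + 1 + j + 1 by omega, ← ih]
    have hS := cosyzygyShortComplex_shortExact N j
    have hE (n : ℕ) : Subsingleton (Abelian.Ext X (cosyzygyShortComplex N j).X₂ (n + 1)) :=
      Abelian.Ext.subsingleton_of_injective X _ n
    exact ⟨fun h ↦ subsingleton_ext_X₁_right hS (hE _) h,
      fun h ↦ subsingleton_ext_X₃_right hS h (hE _)⟩

end Cosyzygy

section LinearExt

variable {R : Type*} [CommRing R] {C : Type*} [Category* C] [Abelian C] [Linear R C]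
  [HasExt.{w} C] {X Y : C} {n : ℕ}

theorem mk₀_smul_id_comp_ext (r : R) (x : Abelian.Ext X Y n) :
    (Abelian.Ext.mk₀ (r • 𝟙 X)).comp x (zero_add n) = r • x := by
  rw [Abelian.Ext.mk₀_smul, Abelian.Ext.smul_comp, Abelian.Ext.mk₀_id_comp]

theorem ext_comp_mk₀_smul_id (r : R) (x : Abelian.Ext X Y n) :
    x.comp (Abelian.Ext.mk₀ (r • 𝟙 Y)) (add_zero n) = r • x := by
  rw [Abelian.Ext.mk₀_smul, Abelian.Ext.comp_smul, Abelian.Ext.comp_mk₀_id]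

theorem smul_ext_eq_zero_of_smul_id_left_eq_zero {r : R} (hX : r • 𝟙 X = 0)
    (x : Abelian.Ext X Y n) : r • x = 0 := by
  rw [← mk₀_smul_id_comp_ext, hX, Abelian.Ext.mk₀_zero, Abelian.Ext.zero_comp]

theorem smul_ext_eq_zero_of_smul_id_right_eq_zero {r : R} (hY : r • 𝟙 Y = 0)
    (x : Abelian.Ext X Y n) : r • x = 0 := by
  rw [← ext_comp_mk₀_smul_id, hY, Abelian.Ext.mk₀_zero, Abelian.Ext.comp_zero]

theorem smul_ext_injective_of_isIso {r : R} (hX : IsIso (r • 𝟙 X)) :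
    Function.Injective (fun x : Abelian.Ext X Y n ↦ r • x) := by
  refine Function.LeftInverse.injective
    (g := fun x ↦ (Abelian.Ext.mk₀ (inv (r • 𝟙 X))).comp x (zero_add n)) fun x ↦ ?_
  dsimp only
  rw [← mk₀_smul_id_comp_ext, Abelian.Ext.mk₀_comp_mk₀_assoc, IsIso.inv_hom_id,
    Abelian.Ext.mk₀_id_comp]

theorem subsingleton_ext_of_isIso_of_pow_smul_eq_zero {r : R} (hX : IsIso (r • 𝟙 X)) {k : ℕ}
    (hY : r ^ k • 𝟙 Y = 0) : Subsingleton (Abelian.Ext X Y n) := by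
  refine subsingleton_of_forall_eq 0 fun x ↦ ?_
  have hk : (fun x : Abelian.Ext X Y n ↦ r • x)^[k] x = 0 := by
    rw [smul_iterate_apply, smul_ext_eq_zero_of_smul_id_right_eq_zero hY]
  refine (smul_ext_injective_of_isIso hX).iterate k (hk.trans ?_)
  rw [smul_iterate_apply, smul_zero]

theorem subsingleton_ext_right_of_smul_shortExact {A B : C} {r : R} {f : A ⟶ A} {g : A ⟶ B}
    {w : f ≫ g = 0} (hS : (ShortComplex.mk f g w).ShortExact) (hf : f = r • 𝟙 A)
    (hX : r • 𝟙 X = 0) (hB : Subsingleton (Abelian.Ext X B n)) :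
    Subsingleton (Abelian.Ext X A n) := by
  subst hf
  refine subsingleton_of_forall_eq 0 fun x ↦ ?_
  obtain ⟨y, rfl⟩ := Abelian.Ext.covariant_sequence_exact₂ _ hS x (hB.elim _ _)
  rw [ext_comp_mk₀_smul_id, smul_ext_eq_zero_of_smul_id_left_eq_zero hX]

end LinearExt

section Resolution

theorem subsingleton_ext_succ_iff {C : Type*} [Category* C] [Abelian C] [HasExt.{w} C] {X Y : C}
    (P : ProjectiveResolution X) (i : ℕ) :
    Subsingleton (Abelian.Ext X Y (i + 1)) ↔
      ∀ f : P.complex.X (i + 1) ⟶ Y, P.complex.d (i + 2) (i + 1) ≫ f = 0 →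
        ∃ g : P.complex.X i ⟶ Y, P.complex.d (i + 1) i ≫ g = f := by
  constructor
  · intro h f hf
    exact (P.extMk_eq_zero_iff _ (i + 2) rfl hf i rfl).1 (h.elim _ _)
  · refine fun h ↦ subsingleton_of_forall_eq 0 fun x ↦ ?_
    obtain ⟨f, hf, rfl⟩ := P.extMk_surjective x (i + 2) rfl
    exact (P.extMk_eq_zero_iff _ (i + 2) rfl hf i rfl).2 (h f hf)

variable {R : Type u} [CommRing R]

theorem subsingleton_ext_pi (X : ModuleCat.{u} R) {ι : Type} (Y : ι → ModuleCat.{u} R) (i : ℕ)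
    (h : ∀ j, Subsingleton (Abelian.Ext X (Y j) i)) :
    Subsingleton (Abelian.Ext X (ModuleCat.of R (∀ j, Y j)) i) := by
  let proj (j : ι) : ModuleCat.of R (∀ j, Y j) ⟶ Y j := ModuleCat.ofHom (LinearMap.proj j)
  obtain _ | i := i
  · simp only [Abelian.Ext.homEquiv₀.subsingleton_congr] at h ⊢
    refine ⟨fun f g ↦ ?_⟩
    ext x j
    exact congr($((h j).elim (f ≫ proj j) (g ≫ proj j)) x)
  · obtain ⟨P⟩ := HasProjectiveResolution.out (Z := X)
    simp only [subsingleton_ext_succ_iff P] at h ⊢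
    intro f hf
    choose g hg using fun j ↦ h j (f ≫ proj j) (by rw [reassoc_of% hf, Limits.zero_comp])
    refine ⟨ModuleCat.ofHom (LinearMap.pi fun j ↦ (g j).hom), ?_⟩
    ext x j
    exact congr($(hg j) x)

theorem extVanish_succ_iff {R : Type} [CommRing R] {X Y : Type} [AddCommGroup X] [Module R X]
    [AddCommGroup Y] [Module R Y] (i : ℕ) :
    ExtVanish R X Y (i + 1) ↔
      Subsingleton (Abelian.Ext (ModuleCat.of R X) (ModuleCat.of R Y) (i + 1)) := by
  obtain ⟨P⟩ := HasProjectiveResolution.out (Z := ModuleCat.of R X)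
  rw [subsingleton_ext_succ_iff P, ExtVanish, ← ModuleCat.isZero_iff_subsingleton,
    (P.isoExt (R := R) (i + 1) (ModuleCat.of R Y)).isZero_iff,
    ← HomologicalComplex.exactAt_iff_isZero_homology,
    HomologicalComplex.exactAt_iff' _ i (i + 1) (i + 2) (by simp) (by simp),
    ShortComplex.moduleCat_exact_iff]
  simp only [HomologicalComplex.shortComplexFunctor'_obj_f,
    HomologicalComplex.shortComplexFunctor'_obj_g, ChainComplex.linearYonedaObj_d]
  rfl

end Resolution

section Devissage

variable {R : Type u} [CommRing R] [IsNoetherianRing R] {P : ModuleCat.{u} R → Prop}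
  (hzero : ∀ A : ModuleCat.{u} R, Limits.IsZero A → P A)
  (hext : ∀ S : ShortComplex (ModuleCat.{u} R), S.ShortExact → Module.Finite R S.X₂ →
    P S.X₁ → P S.X₃ → P S.X₂)
include hzero hext

omit [IsNoetherianRing R] in
theorem prop_of_linearEquiv_of_extension {A B : ModuleCat.{u} R} [Module.Finite R B]
    (e : A ≃ₗ[R] B) (hA : P A) : P B := by
  have hexact : Function.Exact e.toLinearMap (0 : B →ₗ[R] PUnit.{u + 1}) :=
    fun b ↦ ⟨fun _ ↦ e.surjective b, fun _ ↦ rfl⟩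
  exact hext (.moduleCatMk _ _ hexact.linearMap_comp_eq_zero)
    (ModuleCat.shortComplex_shortExact _ hexact e.injective fun _ ↦ ⟨0, rfl⟩) ‹_› hA
    (hzero _ (ModuleCat.isZero_of_subsingleton (.of R PUnit)))

theorem prop_of_quotient_prime_of_le_annihilator {I : Ideal R}
    (hprime : ∀ p : Ideal R, p.IsPrime → I ≤ p → P (ModuleCat.of R (R ⧸ p)))
    (A : ModuleCat.{u} R) [hfin : Module.Finite R A] (hA : I ≤ Module.annihilator R A) : P A := by
  revert hA
  refine IsNoetherianRing.induction_on_isQuotientEquivQuotientPrime R hfin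
    (motive := fun N _ _ _ ↦ I ≤ Module.annihilator R N → P (ModuleCat.of R N)) ?_ ?_ ?_
  · intro N _ _ _ _ _
    exact hzero _ (ModuleCat.isZero_of_subsingleton _)
  · intro N _ _ _ p e hN
    refine prop_of_linearEquiv_of_extension hzero hext (A := .of R (R ⧸ p.asIdeal))
      (B := .of R N) e.symm (hprime _ p.2 ?_)
    rwa [e.annihilator_eq, Ideal.annihilator_quotient] at hN
  · intro N₁ _ _ _ N₂ _ _ _ N₃ _ _ _ f g hf hg hfg h₁ h₃ hN
    exact hext (.moduleCatMk f g hfg.linearMap_comp_eq_zero)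
      (ModuleCat.shortComplex_shortExact _ hfg hf hg) ‹_›
      (h₁ (hN.trans (f.annihilator_le_of_injective hf)))
      (h₃ (hN.trans (g.annihilator_le_of_surjective hg)))

/-- Noetherian induction on the annihilator: a prime quotient `R ⧸ p` with `x ∉ p` is
`x`-regular, and `(R ⧸ p) ⧸ x` is annihilated by an ideal strictly larger than `p`. -/
theorem prop_of_residueField_of_quotSMulTop [IsLocalRing R]
    (hresidue : P (ModuleCat.of R (R ⧸ maximalIdeal R)))
    (hregular : ∀ (A : ModuleCat.{u} R) (x : R), Module.Finite R A → x ∈ maximalIdeal R →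
      IsSMulRegular A x → P (ModuleCat.of R (QuotSMulTop x A)) → P A)
    (A : ModuleCat.{u} R) [Module.Finite R A] : P A := by
  suffices H : ∀ (I : Ideal R) (A : ModuleCat.{u} R) [Module.Finite R A],
      I ≤ Module.annihilator R A → P A from H ⊥ A bot_le
  intro I
  induction I using WellFoundedGT.induction with
  | ind I IH =>
  intro A _ hA
  refine prop_of_quotient_prime_of_le_annihilator hzero hext (fun p hp hIp ↦ ?_) A hA
  obtain rfl | hpm := eq_or_ne p (maximalIdeal R)
  · exact hresidue
  obtain ⟨x, hx, hxp⟩ := SetLike.exists_of_lt (lt_of_le_of_ne (le_maximalIdeal hp.ne_top) hpm)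
  refine hregular _ x inferInstance hx ?_
    (IH (p ⊔ Ideal.span {x}) (hIp.trans_lt (left_lt_sup.2 ?_)) _ (sup_le ?_ ?_))
  · refine .of_right_eq_zero_of_smul fun a ha ↦ ?_
    obtain ⟨a, rfl⟩ := Submodule.Quotient.mk_surjective _ a
    rw [← Submodule.Quotient.mk_smul, Submodule.Quotient.mk_eq_zero] at ha
    exact (Submodule.Quotient.mk_eq_zero _).2 ((hp.mem_or_mem ha).resolve_left hxp)
  · simpa [Ideal.span_le] using hxp
  · exact Ideal.annihilator_quotient.ge.trans (LinearMap.annihilator_le_of_surjective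
      (Submodule.mkQ _) (Submodule.mkQ_surjective _))
  · rw [Ideal.span_singleton_le_iff_mem, Module.mem_annihilator]
    refine (Submodule.mkQ_surjective _).forall.2 fun a ↦ (Submodule.Quotient.mk_eq_zero _).2 ?_
    exact Submodule.smul_mem_pointwise_smul a x _ trivial

end Devissage

section InjectiveDimension

variable {R : Type u} [CommRing R]

theorem subtype_mkQ_shortExact {M : Type u} [AddCommGroup M] [Module R M] (W : Submodule R M) :
    (ShortComplex.moduleCatMk W.subtype W.mkQ
      (LinearMap.exact_subtype_mkQ W).linearMap_comp_eq_zero).ShortExact :=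
  ModuleCat.shortComplex_shortExact _ (LinearMap.exact_subtype_mkQ W) W.subtype_injective
    W.mkQ_surjective

theorem hasInjectiveDimensionLT_of_quotient_ideal {N : ModuleCat.{u} R} {n : ℕ}
    (h : ∀ I : Ideal R, Subsingleton (Abelian.Ext (ModuleCat.of R (R ⧸ I)) N (n + 1))) :
    HasInjectiveDimensionLT N (n + 1) := by
  induction n generalizing N with
  | zero =>
    rw [zero_add, ← injective_iff_hasInjectiveDimensionLT_one,
      ← Module.injective_iff_injective_object, ← Module.Baer.iff_injective]
    intro I φ
    obtain ⟨ψ, hψ⟩ := exists_extension_of_subsingleton_ext_one (subtype_mkQ_shortExact I) (h I)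
      (ModuleCat.ofHom φ)
    exact ⟨ψ.hom, fun x hx ↦ congr($hψ ⟨x, hx⟩)⟩
  | succ n ih =>
    exact ((cosyzygyShortComplex_shortExact N 0).hasInjectiveDimensionLT_X₃_iff n inferInstance).1
      (ih fun I ↦ (subsingleton_ext_cosyzygy_iff _ N n 1).2 (h I))

variable [IsNoetherianRing R] [IsLocalRing R]

theorem subsingleton_ext_of_quotSMulTop {A N : ModuleCat.{u} R} [Module.Finite R A]
    [Module.Finite R N] {x : R} (hx : x ∈ maximalIdeal R) (hA : IsSMulRegular A x) {n : ℕ}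
    (h : Subsingleton (Abelian.Ext (ModuleCat.of R (QuotSMulTop x A)) N (n + 1))) :
    Subsingleton (Abelian.Ext A N n) := by
  by_contra! hne
  have := nontrivial_quotSMulTop_of_mem_maximalIdeal (Abelian.Ext A N n) hx
  refine not_subsingleton (QuotSMulTop x (Abelian.Ext A N n)) <|
    Submodule.Quotient.subsingleton_iff.2 <| eq_top_iff.2 fun y _ ↦ ?_
  obtain ⟨z : Abelian.Ext A N n, hz⟩ := Abelian.Ext.contravariant_sequence_exact₁
    hA.smulShortComplex_shortExact _ y (add_comm 1 n) (h.elim _ _)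
  exact hz ▸ mk₀_smul_id_comp_ext x z ▸ Submodule.smul_mem_pointwise_smul z x _ trivial

theorem subsingleton_ext_of_residueField {N : ModuleCat.{u} R} [Module.Finite R N] {n : ℕ}
    (h : ∀ i, n ≤ i → Subsingleton (Abelian.Ext (ModuleCat.of R (R ⧸ maximalIdeal R)) N i))
    (A : ModuleCat.{u} R) [Module.Finite R A] {i : ℕ} (hi : n ≤ i) :
    Subsingleton (Abelian.Ext A N i) := by
  refine prop_of_residueField_of_quotSMulTop
    (P := fun A ↦ ∀ i, n ≤ i → Subsingleton (Abelian.Ext A N i)) ?_ ?_ h ?_ A i hi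
  · exact fun A hA i _ ↦ subsingleton_ext_left_of_isZero hA
  · exact fun S hS _ h₁ h₃ i hi ↦ subsingleton_ext_X₂_left hS (h₁ i hi) (h₃ i hi)
  · exact fun A x _ hx hA h i hi ↦ subsingleton_ext_of_quotSMulTop hx hA (h _ (by omega))

theorem hasInjectiveDimensionLT_of_residueField {N : ModuleCat.{u} R} [Module.Finite R N] {n : ℕ}
    (h : ∀ i, n + 1 ≤ i →
      Subsingleton (Abelian.Ext (ModuleCat.of R (R ⧸ maximalIdeal R)) N i)) :
    HasInjectiveDimensionLT N (n + 1) :=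
  hasInjectiveDimensionLT_of_quotient_ideal fun _ ↦ subsingleton_ext_of_residueField h _ le_rfl

end InjectiveDimension

section CompletionCokernel

variable {R : Type u} [CommRing R] (I : Ideal R)

theorem isPrecomplete_of_smul_top_eq_bot {M : Type*} [AddCommGroup M] [Module R M]
    (h : (I • ⊤ : Submodule R M) = ⊥) : IsPrecomplete I M where
  prec' f hf := by
    refine ⟨f 1, fun n ↦ ?_⟩
    obtain _ | n := n
    · simp
    · have h₁ : f 1 ≡ f (n + 1) [SMOD (I ^ 1 • ⊤ : Submodule R M)] := hf (by omega)
      rw [pow_one, h, SModEq.bot] at h₁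
      rw [h₁]

/-- The cokernel of the canonical map from a module to its `I`-adic completion. -/
abbrev CompletionCokernel (M : Type*) [AddCommGroup M] [Module R M] : Type _ :=
  AdicCompletion I M ⧸ LinearMap.range (AdicCompletion.of I M)

variable {A B C : Type u} [AddCommGroup A] [Module R A] [AddCommGroup B] [Module R B]
  [AddCommGroup C] [Module R C] {f : A →ₗ[R] B} {g : B →ₗ[R] C}

/-- The functoriality of `CompletionCokernel`. -/
noncomputable def completionCokernelMap (f : A →ₗ[R] B) :
    CompletionCokernel I A →ₗ[R] CompletionCokernel I B :=
  Submodule.mapQ _ _ ((AdicCompletion.map I f).restrictScalars R) <| by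
    rintro _ ⟨a, rfl⟩
    exact ⟨f a, (AdicCompletion.map_of I f a).symm⟩

theorem completionCokernelMap_mk (f : A →ₗ[R] B) (x : AdicCompletion I A) :
    completionCokernelMap I f (Submodule.Quotient.mk x) =
      Submodule.Quotient.mk (AdicCompletion.map I f x) :=
  rfl

theorem completionCokernelMap_surjective (hg : Function.Surjective g) :
    Function.Surjective (completionCokernelMap I g) := by
  refine (Submodule.mkQ_surjective _).forall.2 fun y ↦ ?_
  obtain ⟨x, rfl⟩ := AdicCompletion.map_surjective I hg y
  exact ⟨Submodule.Quotient.mk x, rfl⟩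

theorem completionCokernelMap_lsmul (x : R) (y : CompletionCokernel I A) :
    completionCokernelMap I (LinearMap.lsmul R A x) y = x • y := by
  obtain ⟨y, rfl⟩ := Submodule.Quotient.mk_surjective _ y
  refine congrArg Submodule.Quotient.mk (AdicCompletion.ext fun n ↦ ?_)
  obtain ⟨a, ha⟩ := Submodule.Quotient.mk_surjective _ (y.1 n)
  change LinearMap.reduceModIdeal _ _ (y.1 n) = x • y.1 n
  rw [← ha]
  rfl

variable [IsNoetherianRing R] [Module.Finite R B] (hf : Function.Injective f)
  (hg : Function.Surjective g) (hfg : Function.Exact f g)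
include hf hg hfg

theorem completionCokernelMap_exact :
    Function.Exact (completionCokernelMap I f) (completionCokernelMap I g) := by
  have hexact := AdicCompletion.map_exact (I := I) hf hfg hg
  refine fun x ↦ ⟨fun hx ↦ ?_, ?_⟩
  · obtain ⟨x, rfl⟩ := Submodule.Quotient.mk_surjective _ x
    rw [completionCokernelMap_mk, Submodule.Quotient.mk_eq_zero] at hx
    obtain ⟨c, hc⟩ := hx
    obtain ⟨b, rfl⟩ := hg c
    have hxb : AdicCompletion.map I g (x - AdicCompletion.of I B b) = 0 := by
      rw [map_sub, AdicCompletion.map_of, hc, sub_self]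
    obtain ⟨y, hy⟩ := (hexact _).1 hxb
    refine ⟨Submodule.Quotient.mk y, ?_⟩
    rw [completionCokernelMap_mk, hy, Submodule.Quotient.mk_sub, sub_eq_self,
      Submodule.Quotient.mk_eq_zero]
    exact ⟨b, rfl⟩
  · rintro ⟨y, rfl⟩
    obtain ⟨y, rfl⟩ := Submodule.Quotient.mk_surjective _ y
    rw [completionCokernelMap_mk, completionCokernelMap_mk, hexact.apply_apply_eq_zero,
      Submodule.Quotient.mk_zero]

theorem completionCokernelMap_injective [IsHausdorff I C] :
    Function.Injective (completionCokernelMap I f) := by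
  rw [injective_iff_map_eq_zero]
  refine (Submodule.mkQ_surjective _).forall.2 fun y hy ↦ ?_
  rw [Submodule.mkQ_apply, completionCokernelMap_mk, Submodule.Quotient.mk_eq_zero] at hy
  obtain ⟨b, hb⟩ := hy
  have hgb : AdicCompletion.of I C (g b) = 0 := by
    rw [← AdicCompletion.map_of, hb, (AdicCompletion.map_exact hf hfg hg).apply_apply_eq_zero]
  obtain ⟨a, rfl⟩ := (hfg b).1 (AdicCompletion.of_injective I C (hgb.trans (map_zero _).symm))
  exact (Submodule.Quotient.mk_eq_zero _).2 ⟨a, AdicCompletion.map_injective I hf hb⟩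

end CompletionCokernel

section ExtCompletion

variable {R : Type u} [CommRing R]

theorem adicCompletion_shortExact (I : Ideal R) (N : Type u) [AddCommGroup N] [Module R N]
    [IsHausdorff I N] :
    (ShortComplex.moduleCatMk (AdicCompletion.of I N) (LinearMap.range (AdicCompletion.of I N)).mkQ
      (LinearMap.exact_map_mkQ_range _).linearMap_comp_eq_zero).ShortExact :=
  ModuleCat.shortComplex_shortExact _ (LinearMap.exact_map_mkQ_range _)
    (AdicCompletion.of_injective I N) (Submodule.mkQ_surjective _)

theorem subsingleton_completionCokernel_residueField [IsLocalRing R] :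
    Subsingleton (CompletionCokernel (maximalIdeal R) (R ⧸ maximalIdeal R)) := by
  have := isPrecomplete_of_smul_top_eq_bot (maximalIdeal R) (M := R ⧸ maximalIdeal R) <|
    eq_bot_iff.2 <| Submodule.smul_le.2 fun r hr y _ ↦
      Module.mem_annihilator.1 (Ideal.annihilator_quotient.ge hr) y
  rw [Submodule.Quotient.subsingleton_iff, LinearMap.range_eq_top]
  exact AdicCompletion.of_surjective _ _

theorem residueField_smul_id_eq_zero [IsLocalRing R] {x : R} (hx : x ∈ maximalIdeal R) :
    x • 𝟙 (ModuleCat.of R (R ⧸ maximalIdeal R)) = 0 :=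
  ModuleCat.hom_ext (LinearMap.ext (Module.mem_annihilator.1 (Ideal.annihilator_quotient.ge hx)))

variable [IsNoetherianRing R]

theorem completionCokernelMap_shortExact (I : Ideal R) {A B C : Type u} [AddCommGroup A]
    [Module R A] [AddCommGroup B] [Module R B] [AddCommGroup C] [Module R C] [Module.Finite R B]
    [IsHausdorff I C] {f : A →ₗ[R] B} {g : B →ₗ[R] C} (hf : Function.Injective f)
    (hg : Function.Surjective g) (hfg : Function.Exact f g) :
    (ShortComplex.moduleCatMk (completionCokernelMap I f) (completionCokernelMap I g)
      (completionCokernelMap_exact I hf hg hfg).linearMap_comp_eq_zero).ShortExact :=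
  ModuleCat.shortComplex_shortExact _ (completionCokernelMap_exact I hf hg hfg)
    (completionCokernelMap_injective I hf hg hfg) (completionCokernelMap_surjective I hg)

variable [IsLocalRing R]

theorem subsingleton_ext_completionCokernel (A : ModuleCat.{u} R) [Module.Finite R A] (i : ℕ) :
    Subsingleton (Abelian.Ext (ModuleCat.of R (R ⧸ maximalIdeal R))
      (ModuleCat.of R (CompletionCokernel (maximalIdeal R) A)) i) := by
  refine prop_of_residueField_of_quotSMulTop (P := fun A ↦ Subsingleton (Abelian.Ext
    (ModuleCat.of R (R ⧸ maximalIdeal R))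
      (ModuleCat.of R (CompletionCokernel (maximalIdeal R) A)) i)) ?_ ?_ ?_ ?_ A
  · intro A hA
    have := ModuleCat.isZero_iff_subsingleton.1 hA
    have : IsPrecomplete (maximalIdeal R) A := inferInstance
    refine subsingleton_ext_right_of_isZero (ModuleCat.isZero_iff_subsingleton.2 ?_)
    exact Submodule.Quotient.subsingleton_iff.2
      (LinearMap.range_eq_top.2 (AdicCompletion.of_surjective _ _))
  · intro S hS _ h₁ h₃
    have hfg := (ShortComplex.ShortExact.moduleCat_exact_iff_function_exact S).1 hS.exact
    have := Module.Finite.of_surjective S.g.hom hS.moduleCat_surjective_g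
    exact subsingleton_ext_X₂_right (completionCokernelMap_shortExact (maximalIdeal R)
      hS.moduleCat_injective_f hS.moduleCat_surjective_g hfg) h₁ h₃
  · have := subsingleton_completionCokernel_residueField (R := R)
    exact subsingleton_ext_right_of_isZero (ModuleCat.isZero_of_subsingleton _)
  · intro A x _ hx hA h
    refine subsingleton_ext_right_of_smul_shortExact (R := R) (completionCokernelMap_shortExact _
      (f := LinearMap.lsmul R A x) hA (Submodule.mkQ_surjective _)
      (LinearMap.exact_lsmul_mkQ_smul_top A x)) ?_
      (residueField_smul_id_eq_zero hx) h
    exact ModuleCat.hom_ext (LinearMap.ext fun y ↦ completionCokernelMap_lsmul _ x y)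

theorem subsingleton_ext_adicCompletion_iff (N : ModuleCat.{u} R) [Module.Finite R N] (i : ℕ) :
    Subsingleton (Abelian.Ext (ModuleCat.of R (R ⧸ maximalIdeal R))
      (ModuleCat.of R (AdicCompletion (maximalIdeal R) N)) i) ↔
    Subsingleton (Abelian.Ext (ModuleCat.of R (R ⧸ maximalIdeal R)) N i) := by
  have hS := adicCompletion_shortExact (maximalIdeal R) N
  refine ⟨fun h ↦ ?_, fun h ↦ subsingleton_ext_X₂_right hS h
    (subsingleton_ext_completionCokernel N i)⟩
  obtain _ | i := i
  · exact subsingleton_ext_zero_X₁_right hS h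
  · exact subsingleton_ext_X₁_right hS h (subsingleton_ext_completionCokernel N i)

end ExtCompletion

section ExtLocalized

variable {R : Type u} [CommRing R] (I : Ideal R) (N : Type u) [AddCommGroup N] [Module R N]

/-- The map `(zⱼ) ↦ (zⱼ - zⱼ₊₁)` whose kernel is the inverse limit defining the adic completion. -/
noncomputable def adicTowerDiff :
    (∀ j : ℕ, N ⧸ (I ^ j • ⊤ : Submodule R N)) →ₗ[R] ∀ j : ℕ, N ⧸ (I ^ j • ⊤ : Submodule R N) :=
  LinearMap.pi fun j ↦ LinearMap.proj j -
    AdicCompletion.transitionMap I N (Nat.le_succ j) ∘ₗ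
      LinearMap.proj (φ := fun j : ℕ ↦ N ⧸ (I ^ j • ⊤ : Submodule R N)) (j + 1)

theorem adicTowerDiff_apply (z : ∀ j : ℕ, N ⧸ (I ^ j • ⊤ : Submodule R N)) (j : ℕ) :
    adicTowerDiff I N z j =
      z j - AdicCompletion.transitionMap I N (Nat.le_succ j) (z (j + 1)) :=
  rfl

theorem adicTowerDiff_surjective : Function.Surjective (adicTowerDiff I N) := by
  intro y
  choose L hL using fun j : ℕ ↦ Submodule.factor_surjective
    (Submodule.pow_smul_top_le I N j.le_succ)
  refine ⟨fun j ↦ Nat.rec (motive := fun j ↦ N ⧸ (I ^ j • ⊤ : Submodule R N)) 0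
    (fun j z ↦ L j (z - y j)) j, funext fun j ↦ ?_⟩
  rw [adicTowerDiff_apply]
  exact (congrArg _ (hL j _)).trans (sub_sub_cancel _ _)

theorem exact_incl_adicTowerDiff :
    Function.Exact (AdicCompletion.incl I N) (adicTowerDiff I N) := by
  refine fun z ↦ ⟨fun hz ↦ ⟨⟨z, fun {a b} hab ↦ ?_⟩, rfl⟩, ?_⟩
  · have hz' (j : ℕ) : AdicCompletion.transitionMap I N (Nat.le_succ j) (z (j + 1)) = z j :=
      (sub_eq_zero.1 ((adicTowerDiff_apply I N z j).symm.trans (congrFun hz j))).symm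
    induction b, hab using Nat.le_induction with
    | base =>
      obtain ⟨w, hw⟩ := Submodule.mkQ_surjective _ (z a)
      rw [← hw]
      rfl
    | succ b hab ih =>
      rw [← ih, ← hz' b]
      exact (Submodule.factor_comp_apply _ _ _).symm
  · rintro ⟨y, rfl⟩
    refine funext fun j ↦ (adicTowerDiff_apply I N _ j).trans ?_
    exact sub_eq_zero.2 (y.2 (Nat.le_succ j)).symm

theorem adicTowerDiff_shortExact :
    (ShortComplex.moduleCatMk (AdicCompletion.incl I N) (adicTowerDiff I N)
      (exact_incl_adicTowerDiff I N).linearMap_comp_eq_zero).ShortExact :=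
  ModuleCat.shortComplex_shortExact _ (exact_incl_adicTowerDiff I N)
    (fun _ _ h ↦ AdicCompletion.ext fun n ↦ congrFun h n) (adicTowerDiff_surjective I N)

variable {I}

theorem subsingleton_ext_adicCompletion_of_isIso {X : ModuleCat.{u} R} {x : R} (hx : x ∈ I)
    (hX : IsIso (x • 𝟙 X)) (i : ℕ) :
    Subsingleton (Abelian.Ext X (ModuleCat.of R (AdicCompletion I N)) i) := by
  have hprod (i : ℕ) : Subsingleton (Abelian.Ext X
      (ModuleCat.of R (∀ j : ℕ, N ⧸ (I ^ j • ⊤ : Submodule R N))) i) := by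
    refine subsingleton_ext_pi X (fun j ↦ ModuleCat.of R (N ⧸ (I ^ j • ⊤ : Submodule R N))) i
      fun j ↦ subsingleton_ext_of_isIso_of_pow_smul_eq_zero (R := R) hX (k := j) ?_
    ext y
    exact (Submodule.Quotient.mk_eq_zero _).2
      (Submodule.smul_mem_smul (Ideal.pow_mem_pow hx j) trivial)
  obtain _ | i := i
  · exact subsingleton_ext_zero_X₁_right (adicTowerDiff_shortExact I N) (hprod 0)
  · exact subsingleton_ext_X₁_right (adicTowerDiff_shortExact I N) (hprod _) (hprod _)

end ExtLocalized

section PowerTorsion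

/-- The `I`-power torsion submodule `Γ_I(M)`: the elements killed by some power of `I`. -/
def powerTorsion {R : Type*} [CommRing R] (I : Ideal R) (M : Type*) [AddCommGroup M] [Module R M] :
    Submodule R M :=
  ⨆ n : ℕ, Submodule.torsionBySet R M ↑(I ^ n)

variable {R : Type*} [CommRing R] {I : Ideal R} {M N : Type*} [AddCommGroup M] [Module R M]
  [AddCommGroup N] [Module R N]

theorem monotone_torsionBySet_pow :
    Monotone fun n : ℕ ↦ Submodule.torsionBySet R M ↑(I ^ n) := fun _ _ h ↦
  Submodule.torsionBySet_le_torsionBySet_of_subset (Ideal.pow_le_pow_right h)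

theorem mem_powerTorsion {y : M} : y ∈ powerTorsion I M ↔ ∃ n : ℕ, ∀ r ∈ I ^ n, r • y = 0 := by
  rw [powerTorsion, Submodule.mem_iSup_of_directed _ monotone_torsionBySet_pow.directed_le]
  simp only [Submodule.mem_torsionBySet_iff, Subtype.forall, SetLike.mem_coe]

theorem exists_pow_le_annihilator {W : Submodule R M} (hfg : W.FG) (hW : W ≤ powerTorsion I M) :
    ∃ n : ℕ, I ^ n ≤ W.annihilator := by
  obtain ⟨_, ⟨n, rfl⟩, hn⟩ := (Submodule.fg_iff_compact W).1 hfg _ _ (Set.range_nonempty _)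
    monotone_torsionBySet_pow.directed_le.directedOn_range isLUB_iSup hW
  exact ⟨n, fun r hr ↦ Submodule.mem_annihilator.2 fun y hy ↦
    (Submodule.mem_torsionBySet_iff _ _).1 (hn hy) ⟨r, hr⟩⟩

theorem map_mem_powerTorsion (f : M →ₗ[R] N) {y : M} (hy : y ∈ powerTorsion I M) :
    f y ∈ powerTorsion I N := by
  obtain ⟨n, hn⟩ := mem_powerTorsion.1 hy
  exact mem_powerTorsion.2 ⟨n, fun r hr ↦ by rw [← map_smul, hn r hr, map_zero]⟩

theorem mem_powerTorsion_of_injective {f : M →ₗ[R] N} (hf : Function.Injective f) {y : M}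
    (hy : f y ∈ powerTorsion I N) : y ∈ powerTorsion I M := by
  obtain ⟨n, hn⟩ := mem_powerTorsion.1 hy
  exact mem_powerTorsion.2 ⟨n, fun r hr ↦ hf (by rw [map_smul, hn r hr, map_zero])⟩

theorem powerTorsion_eq_top_of_surjective {f : M →ₗ[R] N} (hf : Function.Surjective f)
    (hM : powerTorsion I M = ⊤) : powerTorsion I N = ⊤ := by
  refine Submodule.eq_top_iff'.2 (hf.forall.2 fun y ↦ map_mem_powerTorsion f ?_)
  exact hM.ge trivial

theorem powerTorsion_eq_top_of_le {W : Submodule R M} (hW : W ≤ powerTorsion I M) :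
    powerTorsion I W = ⊤ :=
  Submodule.eq_top_iff'.2 fun y ↦ mem_powerTorsion_of_injective W.subtype_injective (hW y.2)

theorem powerTorsion_quotient_of_pow_le {J : Ideal R} {n : ℕ} (h : I ^ n ≤ J) :
    powerTorsion I (R ⧸ J) = ⊤ :=
  Submodule.eq_top_iff'.2 fun y ↦ mem_powerTorsion.2
    ⟨n, fun _ hr ↦ Module.mem_annihilator.1 (Ideal.annihilator_quotient.ge (h hr)) y⟩

theorem powerTorsion_quotient_powerTorsion [IsNoetherianRing R] :
    powerTorsion I (M ⧸ powerTorsion I M) = ⊥ := by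
  refine eq_bot_iff.2 ((Submodule.mkQ_surjective _).forall.2 fun y hy ↦ ?_)
  obtain ⟨n, hn⟩ := mem_powerTorsion.1 hy
  have hle : (I ^ n) • (R ∙ y) ≤ powerTorsion I M := Submodule.smul_le.2 fun r hr z hz ↦ by
    obtain ⟨a, rfl⟩ := Submodule.mem_span_singleton.1 hz
    rw [smul_comm]
    exact Submodule.smul_mem _ a ((Submodule.Quotient.mk_eq_zero _).1 (hn r hr))
  obtain ⟨k, hk⟩ := exists_pow_le_annihilator (Submodule.FG.of_le
    (Submodule.fg_span_singleton y) Submodule.smul_le_right) hle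
  refine (Submodule.Quotient.mk_eq_zero _).2 (mem_powerTorsion.2 ⟨k + n, fun r hr ↦ ?_⟩)
  have hry : r • y ∈ (I ^ k) • (I ^ n) • (R ∙ y) := by
    rw [← mul_smul, ← pow_add]
    exact Submodule.smul_mem_smul hr (Submodule.mem_span_singleton_self y)
  rwa [(Submodule.le_annihilator_iff).1 hk] at hry

theorem powerTorsion_inf_le_sup (I J : Ideal R) :
    powerTorsion I M ⊓ powerTorsion J M ≤ powerTorsion (I ⊔ J) M := by
  rintro y ⟨hI, hJ⟩
  obtain ⟨a, ha⟩ := mem_powerTorsion.1 hI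
  obtain ⟨b, hb⟩ := mem_powerTorsion.1 hJ
  refine mem_powerTorsion.2 ⟨a + b, fun r hr ↦ ?_⟩
  obtain ⟨s, hs, t, ht, rfl⟩ := Submodule.mem_sup.1 (Ideal.sup_pow_add_le_pow_sup_pow hr)
  rw [add_smul, ha s hs, hb t ht, add_zero]

theorem isSMulRegular_of_powerTorsion_span_eq_bot {x : R}
    (h : powerTorsion (Ideal.span {x}) M = ⊥) : IsSMulRegular M x := by
  refine IsSMulRegular.of_right_eq_zero_of_smul fun y hy ↦ ?_
  refine (Submodule.mem_bot R).1 (h.le (mem_powerTorsion.2 ⟨1, fun r hr ↦ ?_⟩))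
  obtain ⟨a, rfl⟩ := Ideal.mem_span_singleton'.1 (pow_one (Ideal.span {x}) ▸ hr)
  rw [mul_smul, hy, smul_zero]

theorem exists_pow_forall_mem_apply_eq_zero [IsNoetherianRing R] {J : Ideal R} (φ : J →ₗ[R] M)
    (hφ : LinearMap.range φ ≤ powerTorsion I M) :
    ∃ n : ℕ, ∀ x : J, (x : R) ∈ I ^ n → φ x = 0 := by
  obtain ⟨k, hk⟩ := exists_pow_le_annihilator (Submodule.fg_range φ) hφ
  obtain ⟨c, hc⟩ := Ideal.exists_pow_inf_eq_pow_smul I J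
  refine ⟨c + k, fun x hx ↦ ?_⟩
  have hxJ : (x : R) ∈ I ^ k • J := by
    have hinf : (x : R) ∈ I ^ (c + k) • (⊤ : Submodule R R) ⊓ J := ⟨by simpa using hx, x.2⟩
    rw [hc _ (Nat.le_add_right c k), Nat.add_sub_cancel_left] at hinf
    exact Submodule.smul_mono le_rfl inf_le_right hinf
  have hφx : φ x ∈ Submodule.map φ (I ^ k • ⊤) :=
    Submodule.mem_map_of_mem ((Submodule.mem_smul_top_iff _ _ _).2 hxJ)
  rwa [Submodule.map_smul'', Submodule.map_top, Submodule.le_annihilator_iff.1 hk] at hφx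

/-- The functoriality of `powerTorsion`. -/
def powerTorsionMap (I : Ideal R) (f : M →ₗ[R] N) : powerTorsion I M →ₗ[R] powerTorsion I N :=
  f.restrict fun _ ↦ map_mem_powerTorsion f

end PowerTorsion

section ExtPowerTorsion

variable {R : Type u} [CommRing R] {I : Ideal R}

theorem injective_quotient {M : Type u} [AddCommGroup M] [Module R M]
    [hM : Injective (ModuleCat.of R M)] (W : Submodule R M)
    [hW : Injective (ModuleCat.of R W)] : Injective (ModuleCat.of R (M ⧸ W)) := by
  rw [injective_iff_hasInjectiveDimensionLT_one] at hM hW ⊢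
  have : HasInjectiveDimensionLT (ModuleCat.of R W) 2 :=
    hasInjectiveDimensionLT_of_ge _ 1 2 one_le_two
  exact (subtype_mkQ_shortExact W).hasInjectiveDimensionLT_X₃ 1 hM this

theorem isIso_smul_id_of_injective {Y : ModuleCat.{u} R} [Injective Y] {x : R}
    (hx : IsSMulRegular Y x) : IsIso (x • 𝟙 Y) := by
  have : Mono (x • 𝟙 Y) := (ModuleCat.mono_iff_injective _).2 hx
  have hleft := Injective.comp_factorThru (𝟙 Y) (x • 𝟙 Y)
  have hright : Injective.factorThru (𝟙 Y) (x • 𝟙 Y) ≫ (x • 𝟙 Y) = 𝟙 Y := by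
    rwa [Linear.comp_smul, Category.comp_id, ← Category.id_comp (Injective.factorThru _ _),
      ← Linear.smul_comp]
  exact ⟨_, hleft, hright⟩

section

variable {S : ShortComplex (ModuleCat.{u} R)} (hS : S.ShortExact)
include hS

theorem powerTorsionMap_exact :
    Function.Exact (powerTorsionMap I S.f.hom) (powerTorsionMap I S.g.hom) := by
  have hexact := (ShortComplex.ShortExact.moduleCat_exact_iff_function_exact S).1 hS.exact
  refine fun y ↦ ⟨fun hy ↦ ?_, ?_⟩
  · obtain ⟨x, hx⟩ := (hexact y.1).1 (congrArg Subtype.val hy)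
    exact ⟨⟨x, mem_powerTorsion_of_injective (f := S.f.hom) hS.moduleCat_injective_f
      (hx ▸ y.2)⟩, Subtype.ext hx⟩
  · rintro ⟨x, rfl⟩
    exact Subtype.ext (hexact.apply_apply_eq_zero x.1)

theorem powerTorsionMap_surjective
    (h : ∀ n : ℕ, Subsingleton (Abelian.Ext (ModuleCat.of R (R ⧸ I ^ n)) S.X₁ 1)) :
    Function.Surjective (powerTorsionMap I S.g.hom) := by
  intro z
  obtain ⟨n, hn⟩ := mem_powerTorsion.1 z.2
  obtain ⟨ψ, hψ⟩ := exists_lift_of_subsingleton_ext_one hS (h n)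
    (ModuleCat.ofHom ((I ^ n).liftQ (LinearMap.toSpanSingleton R S.X₃ z) hn))
  refine ⟨⟨ψ (Submodule.Quotient.mk 1), map_mem_powerTorsion ψ.hom
    ((powerTorsion_quotient_of_pow_le le_rfl).ge trivial)⟩, Subtype.ext ?_⟩
  exact congr($hψ (Submodule.Quotient.mk 1)).trans (one_smul R z.1)

end

variable [IsNoetherianRing R] {Y : ModuleCat.{u} R}

theorem injective_powerTorsion (hY : ∀ A : ModuleCat.{u} R, Module.Finite R A →
      powerTorsion I A = ⊤ → Subsingleton (Abelian.Ext A Y 1)) :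
    Injective (ModuleCat.of R (powerTorsion I Y)) := by
  rw [← Module.injective_iff_injective_object, ← Module.Baer.iff_injective]
  intro J φ
  obtain ⟨n, hn⟩ := exists_pow_forall_mem_apply_eq_zero ((powerTorsion I Y).subtype ∘ₗ φ) <| by
    rintro _ ⟨x, rfl⟩
    exact (φ x).2
  let π : R →ₗ[R] R ⧸ I ^ n := (I ^ n).mkQ
  let j : J →ₗ[R] R ⧸ I ^ n := π ∘ₗ J.subtype
  let jbar := j.ker.liftQ j le_rfl
  have hker : j.ker ≤ ((powerTorsion I Y).subtype ∘ₗ φ).ker := fun x hx ↦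
    hn x ((Submodule.Quotient.mk_eq_zero _).1 hx)
  have hexact : Function.Exact jbar jbar.range.mkQ := LinearMap.exact_map_mkQ_range jbar
  have hS := ModuleCat.shortComplex_shortExact
    (.moduleCatMk jbar jbar.range.mkQ hexact.linearMap_comp_eq_zero) hexact
    (LinearMap.ker_eq_bot.1 (Submodule.ker_liftQ_eq_bot _ _ _ le_rfl)) (Submodule.mkQ_surjective _)
  obtain ⟨ψ, hψ⟩ := exists_extension_of_subsingleton_ext_one hS
    (hY (.of R (_ ⧸ jbar.range)) inferInstance <| powerTorsion_eq_top_of_surjective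
      (Submodule.mkQ_surjective _) (powerTorsion_quotient_of_pow_le le_rfl))
    (ModuleCat.ofHom (j.ker.liftQ ((powerTorsion I Y).subtype ∘ₗ φ) hker))
  refine ⟨(ψ.hom ∘ₗ π).codRestrict _ fun r ↦
    map_mem_powerTorsion ψ.hom ((powerTorsion_quotient_of_pow_le le_rfl).ge trivial), fun x hx ↦ ?_⟩
  exact Subtype.ext (congr($hψ (Submodule.Quotient.mk ⟨x, hx⟩)))

theorem injective_powerTorsion_of_injective [Injective Y] :
    Injective (ModuleCat.of R (powerTorsion I Y)) :=
  injective_powerTorsion fun _ _ _ ↦ Abelian.Ext.subsingleton_of_injective _ _ 0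

theorem subsingleton_ext_one_of_powerTorsion_eq_top
    (h : ∀ A : ModuleCat.{u} R, Module.Finite R A →
      powerTorsion I A = ⊤ → Subsingleton (Abelian.Ext A Y 1))
    {T : ModuleCat.{u} R} (hT : powerTorsion I T = ⊤) : Subsingleton (Abelian.Ext T Y 1) := by
  have hS := cosyzygyShortComplex_shortExact Y 0
  set S := cosyzygyShortComplex Y 0
  refine subsingleton_ext_one_X₁_right_of_forall_exists_lift hS
    (Abelian.Ext.subsingleton_of_injective _ _ 0) fun φ ↦ ?_
  have hΓ := ModuleCat.shortComplex_shortExact (.moduleCatMk (powerTorsionMap I S.f.hom)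
    (powerTorsionMap I S.g.hom) (powerTorsionMap_exact hS).linearMap_comp_eq_zero)
    (powerTorsionMap_exact hS)
    (fun _ _ hab ↦ Subtype.ext (hS.moduleCat_injective_f (congrArg Subtype.val hab)))
    (powerTorsionMap_surjective hS fun n ↦
      h _ inferInstance (powerTorsion_quotient_of_pow_le le_rfl))
  have : Injective (ModuleCat.of R (powerTorsion I S.X₁)) := injective_powerTorsion h
  obtain ⟨ψ, hψ⟩ := exists_lift_of_subsingleton_ext_one hΓ
    (Abelian.Ext.subsingleton_of_injective T (.of R (powerTorsion I S.X₁)) 0)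
    (ModuleCat.ofHom (φ.hom.codRestrict _ fun t ↦ map_mem_powerTorsion φ.hom (hT.ge trivial)))
  refine ⟨ModuleCat.ofHom ((powerTorsion I S.X₂).subtype ∘ₗ ψ.hom), ?_⟩
  ext t
  exact congr(Subtype.val ($hψ t))

theorem subsingleton_ext_of_finite_of_residueField [IsLocalRing R] {i : ℕ}
    (h : Subsingleton (Abelian.Ext (ModuleCat.of R (R ⧸ maximalIdeal R)) Y i))
    (A : ModuleCat.{u} R) [hfin : Module.Finite R A] (hA : powerTorsion (maximalIdeal R) A = ⊤) :
    Subsingleton (Abelian.Ext A Y i) := by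
  obtain ⟨n, hn⟩ := exists_pow_le_annihilator hfin.fg_top hA.ge
  refine prop_of_quotient_prime_of_le_annihilator (P := fun A ↦ Subsingleton (Abelian.Ext A Y i))
    (I := maximalIdeal R ^ n) (fun A hA ↦ subsingleton_ext_left_of_isZero hA) ?_ ?_ A ?_
  · exact fun S hS _ h₁ h₃ ↦ subsingleton_ext_X₂_left hS h₁ h₃
  · intro p hp hle
    rwa [← (maximalIdeal.isMaximal R).eq_of_le hp.ne_top (hp.le_of_pow_le hle)]
  · rwa [← Submodule.annihilator_top]

theorem subsingleton_ext_of_powerTorsion_eq_top [IsLocalRing R] {i : ℕ}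
    (h : Subsingleton (Abelian.Ext (ModuleCat.of R (R ⧸ maximalIdeal R)) Y (i + 1)))
    {T : ModuleCat.{u} R} (hT : powerTorsion (maximalIdeal R) T = ⊤) :
    Subsingleton (Abelian.Ext T Y (i + 1)) := by
  rw [← zero_add i, ← subsingleton_ext_cosyzygy_iff] at h ⊢
  exact subsingleton_ext_one_of_powerTorsion_eq_top
    (fun A _ ↦ subsingleton_ext_of_finite_of_residueField h A) hT

theorem subsingleton_ext_adicCompletion_of_powerTorsion_eq_bot (N : Type u) [AddCommGroup N]
    [Module R N] {J : Ideal R} (hJ : J ≤ I) [Injective Y] (hY : powerTorsion J Y = ⊥) (i : ℕ) :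
    Subsingleton (Abelian.Ext Y (ModuleCat.of R (AdicCompletion I N)) i) := by
  have hfg := IsNoetherian.noetherian J
  induction J, hfg using Submodule.fg_induction generalizing Y with
  | singleton x =>
    exact subsingleton_ext_adicCompletion_of_isIso N (hJ (Submodule.mem_span_singleton_self x))
      (isIso_smul_id_of_injective (isSMulRegular_of_powerTorsion_span_eq_bot hY)) i
  | sup J₁ J₂ _ _ h₁ h₂ =>
    have hW : powerTorsion J₂ (powerTorsion J₁ Y) = ⊥ := by
      refine eq_bot_iff.2 fun y hy ↦ Subtype.ext ((Submodule.mem_bot R).1 (hY.le ?_))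
      exact powerTorsion_inf_le_sup J₁ J₂ ⟨y.2, map_mem_powerTorsion (Submodule.subtype _) hy⟩
    have := injective_powerTorsion_of_injective (I := J₁) (Y := Y)
    have : Injective (ModuleCat.of R (Y ⧸ powerTorsion J₁ Y)) := injective_quotient _
    exact subsingleton_ext_X₂_left (subtype_mkQ_shortExact (powerTorsion J₁ Y))
      (h₂ (Y := .of R (powerTorsion J₁ Y)) (le_sup_right.trans hJ) hW)
      (h₁ (Y := .of R (Y ⧸ powerTorsion J₁ Y)) (le_sup_left.trans hJ)
        powerTorsion_quotient_powerTorsion)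

theorem subsingleton_ext_quotient_powerTorsion (N : Type u) [AddCommGroup N] [Module R N]
    [Injective Y] (i : ℕ) : Subsingleton (Abelian.Ext (ModuleCat.of R (Y ⧸ powerTorsion I Y))
      (ModuleCat.of R (AdicCompletion I N)) i) := by
  have := injective_powerTorsion_of_injective (I := I) (Y := Y)
  have : Injective (ModuleCat.of R (Y ⧸ powerTorsion I Y)) := injective_quotient _
  exact subsingleton_ext_adicCompletion_of_powerTorsion_eq_bot N le_rfl
    powerTorsion_quotient_powerTorsion i

end ExtPowerTorsion

section Cosyzygies

variable {R : Type u} [CommRing R] {I : Ideal R} {N Y : ModuleCat.{u} R}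

theorem exists_desc_of_powerTorsion_comp_eq_zero {P Z : ModuleCat.{u} R} {f : P ⟶ Z}
    (hf : ModuleCat.ofHom (powerTorsion I P).subtype ≫ f = 0) :
    ∃ g, ModuleCat.ofHom (powerTorsion I P).mkQ ≫ g = f :=
  have hS := subtype_mkQ_shortExact (powerTorsion I P)
  have := hS.epi_g
  ⟨hS.exact.desc f hf, hS.exact.g_desc f hf⟩

theorem mk₀_comp_eq_zero_of_powerTorsion_comp_eq_zero
    (hY : ∀ (P : ModuleCat.{u} R) (n : ℕ), Injective P →
      Subsingleton (Abelian.Ext (ModuleCat.of R (P ⧸ powerTorsion I P)) Y n))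
    {a j : ℕ} (haj : a ≤ j) {Z : ModuleCat.{u} R} {f : (cosyzygyShortComplex N j).X₃ ⟶ Z}
    (hf : ModuleCat.ofHom (powerTorsion I (cosyzygyShortComplex N j).X₂).subtype ≫
      (cosyzygyShortComplex N j).g ≫ f = 0) (x : Abelian.Ext Z Y a) :
    (Abelian.Ext.mk₀ f).comp x (zero_add a) = 0 := by
  induction a generalizing j Z with
  | zero =>
    obtain ⟨g, hg⟩ := exists_desc_of_powerTorsion_comp_eq_zero hf
    obtain ⟨ξ, rfl⟩ := (Abelian.Ext.mk₀_bijective _ _).2 x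
    have := (cosyzygyShortComplex_shortExact N j).epi_g
    have hQ := Abelian.Ext.homEquiv₀.subsingleton_congr.1
      (hY (cosyzygyShortComplex N j).X₂ 0 inferInstance)
    have hfξ : f ≫ ξ = 0 := by
      rw [← cancel_epi (cosyzygyShortComplex N j).g, ← Category.assoc, ← hg, Category.assoc,
        hQ.elim (g ≫ ξ) 0, Limits.comp_zero, Limits.comp_zero]
    rw [Abelian.Ext.mk₀_comp_mk₀, hfξ, Abelian.Ext.mk₀_zero]
  | succ a ih =>
    obtain ⟨j, rfl⟩ := Nat.exists_eq_add_of_le' (Nat.one_le_of_lt haj)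
    obtain ⟨g, hg⟩ := exists_desc_of_powerTorsion_comp_eq_zero hf
    refine mk₀_comp_eq_zero_of_kernel_lift (cosyzygyShortComplex_shortExact N (j + 1)) hg.symm
      (hY _ _ inferInstance) (fun h y hh ↦ ih (j := j) (by omega) ?_ y) x
    rw [← cancel_mono (Limits.kernel.ι g), Limits.zero_comp]
    ext w
    exact congr($hh ((cosyzygyShortComplex N j).g w.1)).trans
      ((Submodule.Quotient.mk_eq_zero _).2
        (map_mem_powerTorsion (cosyzygyShortComplex N (j + 1)).f.hom
          (map_mem_powerTorsion (cosyzygyShortComplex N j).g.hom w.2)))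

/-- On `W`, the element `w - f (σ w)` depends only on `g w`, so it defines a section of `g` over
`W.map g`. -/
theorem exists_comp_eq_of_range_le_map {K P C X : Type*} [AddCommGroup K] [Module R K]
    [AddCommGroup P] [Module R P] [AddCommGroup C] [Module R C] [AddCommGroup X] [Module R X]
    {f : K →ₗ[R] P} {g : P →ₗ[R] C} (hfg : Function.Exact f g) {W : Submodule R P}
    {σ : P →ₗ[R] K} (hσ : ∀ a, f a ∈ W → σ (f a) = a) {z : X →ₗ[R] C}
    (hz : LinearMap.range z ≤ W.map g) : ∃ ψ : X →ₗ[R] P, g ∘ₗ ψ = z := by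
  let q : W →ₗ[R] C := g ∘ₗ W.subtype
  have hzq (x : X) : z x ∈ LinearMap.range q := by
    rw [LinearMap.range_comp, Submodule.range_subtype]
    exact hz ⟨x, rfl⟩
  let e : W →ₗ[R] P := W.subtype - f ∘ₗ σ ∘ₗ W.subtype
  have hker : LinearMap.ker q ≤ LinearMap.ker e := by
    rintro ⟨_, hw⟩ hgw
    obtain ⟨a, rfl⟩ := (hfg _).1 hgw
    exact sub_eq_zero.2 (congrArg f (hσ a hw)).symm
  let sect : LinearMap.range q →ₗ[R] P :=
    (LinearMap.ker q).liftQ e hker ∘ₗ q.quotKerEquivRange.symm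
  have hsect (y : LinearMap.range q) : g (sect y) = y := by
    obtain ⟨_, w, rfl⟩ := y
    calc
      g (sect ⟨q w, w, rfl⟩) = g (e w) :=
        congrArg (fun y ↦ g ((LinearMap.ker q).liftQ e hker y))
          (q.quotKerEquivRange_symm_apply_image w ⟨w, rfl⟩)
      _ = q w := by simp [e, q, hfg.apply_apply_eq_zero]
  exact ⟨sect ∘ₗ z.codRestrict _ hzq, LinearMap.ext fun x ↦ hsect ⟨z x, hzq x⟩⟩

theorem exists_lift_of_range_le_map_powerTorsion {p : ℕ}
    (h : ∀ T : ModuleCat.{u} R, powerTorsion I T = ⊤ →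
      Subsingleton (Abelian.Ext T (cosyzygy N p) 1))
    {X : ModuleCat.{u} R} (z : X ⟶ cosyzygy N (p + 2))
    (hz : LinearMap.range z.hom ≤ (powerTorsion I (cosyzygyShortComplex N (p + 1)).X₂).map
      (cosyzygyShortComplex N (p + 1)).g.hom) :
    ∃ ψ : X ⟶ (cosyzygyShortComplex N (p + 1)).X₂,
      ψ ≫ (cosyzygyShortComplex N (p + 1)).g = z := by
  have hS := cosyzygyShortComplex_shortExact N p
  have hS' := cosyzygyShortComplex_shortExact N (p + 1)
  set S := cosyzygyShortComplex N p
  set S' := cosyzygyShortComplex N (p + 1)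
  have hexact := (ShortComplex.ShortExact.moduleCat_exact_iff_function_exact S').1 hS'.exact
  let A := (powerTorsion I S'.X₂).comap S'.f.hom
  have hA : powerTorsion I A = ⊤ := powerTorsion_eq_top_of_le fun y hy ↦
    mem_powerTorsion_of_injective (f := S'.f.hom) hS'.moduleCat_injective_f hy
  obtain ⟨l, hl⟩ := exists_lift_of_subsingleton_ext_one hS (h (.of R A) hA)
    (ModuleCat.ofHom A.subtype)
  let i : ModuleCat.of R A ⟶ S'.X₂ := ModuleCat.ofHom (S'.f.hom ∘ₗ A.subtype)
  have : Mono i := (ModuleCat.mono_iff_injective _).2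
    (hS'.moduleCat_injective_f.comp A.subtype_injective)
  have hG : i ≫ Injective.factorThru l i = l := Injective.comp_factorThru l i
  obtain ⟨ψ, hψ⟩ := exists_comp_eq_of_range_le_map hexact
    (σ := S.g.hom ∘ₗ (Injective.factorThru l i).hom)
    (fun a ha ↦ congr(S.g ($hG ⟨a, ha⟩)).trans congr($hl ⟨a, ha⟩)) hz
  exact ⟨ModuleCat.ofHom ψ, ModuleCat.hom_ext hψ⟩

theorem subsingleton_ext_quotient_of_le_powerTorsion {P : ModuleCat.{u} R} {n : ℕ}
    (hT : ∀ T : ModuleCat.{u} R, powerTorsion I T = ⊤ → Subsingleton (Abelian.Ext T Y n))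
    (hP : Subsingleton (Abelian.Ext (ModuleCat.of R (P ⧸ powerTorsion I P)) Y n))
    {U : Submodule R P} (hU : U ≤ powerTorsion I P) :
    Subsingleton (Abelian.Ext (ModuleCat.of R (P ⧸ U)) Y n) := by
  have hS := ModuleCat.shortComplex_shortExact (.moduleCatMk (Submodule.factor hU).ker.subtype
    (Submodule.factor hU) (LinearMap.exact_subtype_ker_map _).linearMap_comp_eq_zero)
    (LinearMap.exact_subtype_ker_map _) (Submodule.subtype_injective _)
    (Submodule.factor_surjective hU)
  refine subsingleton_ext_X₂_left hS (hT _ ?_) hP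
  refine powerTorsion_eq_top_of_le ?_
  rw [show (Submodule.factor hU).ker = _ from Submodule.ker_mapQ ..]
  rintro _ ⟨y, hy, rfl⟩
  exact map_mem_powerTorsion U.mkQ (by simpa using hy)

variable [IsNoetherianRing R] [IsLocalRing R]

theorem eq_zero_of_forall_mk₀_comp_eq_zero {P : ModuleCat.{u} R} {D : Submodule R P}
    (hD : D ≤ powerTorsion (maximalIdeal R) P) {a : ℕ}
    (hP : Subsingleton (Abelian.Ext
      (ModuleCat.of R (P ⧸ powerTorsion (maximalIdeal R) P)) Y (a + 1)))
    (hk : ¬ Subsingleton (Abelian.Ext (ModuleCat.of R (R ⧸ maximalIdeal R)) Y a))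
    (hk' : Subsingleton (Abelian.Ext (ModuleCat.of R (R ⧸ maximalIdeal R)) Y (a + 1)))
    (i : ModuleCat.of R (R ⧸ maximalIdeal R) ⟶ ModuleCat.of R (P ⧸ D))
    (hi : ∀ x : Abelian.Ext (ModuleCat.of R (P ⧸ D)) Y a,
      (Abelian.Ext.mk₀ i).comp x (zero_add a) = 0) : i = 0 := by
  have : IsSimpleModule R (R ⧸ maximalIdeal R) :=
    isSimpleModule_iff_isCoatom.2 (maximalIdeal.isMaximal R).out
  refine ModuleCat.hom_ext ((LinearMap.injective_or_eq_zero i.hom).resolve_left fun hinj ↦ hk ?_)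
  let U := i.hom.range.comap D.mkQ
  have hDU : D ≤ U := fun d hd ↦
    ⟨0, (map_zero _).trans ((Submodule.Quotient.mk_eq_zero D).2 hd).symm⟩
  have hU : U ≤ powerTorsion (maximalIdeal R) P := by
    rintro y ⟨t, ht⟩
    have hy : Submodule.factor hD (i t) ∈
        powerTorsion (maximalIdeal R) (P ⧸ powerTorsion (maximalIdeal R) P) :=
      map_mem_powerTorsion (Submodule.factor hD ∘ₗ i.hom)
        ((powerTorsion_quotient_of_pow_le (pow_one _).le).ge trivial)
    rw [powerTorsion_quotient_powerTorsion, Submodule.mem_bot] at hy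
    refine (Submodule.Quotient.mk_eq_zero _).1 (.trans ?_ hy)
    exact congrArg (Submodule.factor hD) ht.symm
  have hexact : Function.Exact i.hom (Submodule.factor hDU) := by
    rw [LinearMap.exact_iff]
    exact (Submodule.ker_mapQ ..).trans
      (Submodule.map_comap_eq_of_surjective D.mkQ_surjective i.hom.range)
  have hS := ModuleCat.shortComplex_shortExact (.moduleCatMk i.hom (Submodule.factor hDU)
    hexact.linearMap_comp_eq_zero) hexact hinj (Submodule.factor_surjective hDU)
  refine subsingleton_ext_X₁_left_of_forall_comp_eq_zero hS hi ?_
  exact subsingleton_ext_quotient_of_le_powerTorsion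
    (fun T ↦ subsingleton_ext_of_powerTorsion_eq_top hk') hP hU

theorem subsingleton_ext_residueField_add_two [Module.Finite R N] {a p : ℕ} (hap : a ≤ p)
    (ha : ¬ Subsingleton (Abelian.Ext (ModuleCat.of R (R ⧸ maximalIdeal R)) N a))
    (ha' : Subsingleton (Abelian.Ext (ModuleCat.of R (R ⧸ maximalIdeal R)) N (a + 1)))
    (hp : Subsingleton (Abelian.Ext (ModuleCat.of R (R ⧸ maximalIdeal R)) N (p + 1))) :
    Subsingleton (Abelian.Ext (ModuleCat.of R (R ⧸ maximalIdeal R)) N (p + 2)) := by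
  have hS := cosyzygyShortComplex_shortExact N (p + 1)
  have hS' := cosyzygyShortComplex_shortExact N (p + 2)
  let S := cosyzygyShortComplex N (p + 1)
  let S' := cosyzygyShortComplex N (p + 2)
  have hT (T : ModuleCat.{u} R) (hT : powerTorsion (maximalIdeal R) T = ⊤) :
      Subsingleton (Abelian.Ext T (cosyzygy N p) 1) := by
    rw [subsingleton_ext_cosyzygy_iff _ _ 0, zero_add]
    exact subsingleton_ext_of_powerTorsion_eq_top hp hT
  rw [show p + 2 = 0 + (p + 1) + 1 by omega, ← subsingleton_ext_cosyzygy_iff]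
  refine subsingleton_ext_one_X₁_right_of_forall_exists_lift hS
    (Abelian.Ext.subsingleton_of_injective _ _ 0) fun z ↦
    exists_lift_of_range_le_map_powerTorsion hT z ?_
  let D : Submodule R S'.X₂ := (powerTorsion (maximalIdeal R) S.X₂).map (S'.f.hom ∘ₗ S.g.hom)
  have hD : D ≤ powerTorsion (maximalIdeal R) S'.X₂ := Submodule.map_le_iff_le_comap.2
    fun w hw ↦ map_mem_powerTorsion (S'.f.hom ∘ₗ S.g.hom) hw
  rw [← subsingleton_ext_adicCompletion_iff] at ha ha'
  have hzero := eq_zero_of_forall_mk₀_comp_eq_zero hD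
    (subsingleton_ext_quotient_powerTorsion N _) ha ha'
    (z ≫ S'.f ≫ ModuleCat.ofHom D.mkQ) fun x ↦ by
      rw [← Abelian.Ext.mk₀_comp_mk₀_assoc, mk₀_comp_eq_zero_of_powerTorsion_comp_eq_zero
        (fun P n _ ↦ subsingleton_ext_quotient_powerTorsion N n) (by omega : a ≤ p + 1) ?_ x,
        Abelian.Ext.comp_zero]
      ext w
      exact (Submodule.Quotient.mk_eq_zero D).2 ⟨w, w.2, rfl⟩
  rintro _ ⟨t, rfl⟩
  obtain ⟨w, hw, hwt⟩ := (Submodule.Quotient.mk_eq_zero D).1 congr($hzero t)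
  exact ⟨w, hw, hS'.moduleCat_injective_f hwt⟩

end Cosyzygies

section ResidueField

variable {R : Type u} [CommRing R] {N : ModuleCat.{u} R}

theorem subsingleton_ext_quotient_ofList_smul_top {M : Type u} [AddCommGroup M] [Module R M]
    {rs : List R} (hrs : RingTheory.Sequence.IsWeaklyRegular M rs) {n : ℕ}
    (h : ∀ i, n ≤ i → i ≤ n + rs.length → Subsingleton (Abelian.Ext (ModuleCat.of R M) N i)) :
    Subsingleton (Abelian.Ext (ModuleCat.of R (M ⧸ (Ideal.ofList rs • ⊤ : Submodule R M))) N
      (n + rs.length)) := by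
  induction rs generalizing M n with
  | nil =>
    refine subsingleton_ext_left_of_retract
      (.ofIso (Submodule.quotEquivOfEqBot _ ?_).toModuleIso) (h _ le_rfl le_rfl)
    rw [Ideal.ofList_nil, Submodule.bot_smul]
  | cons x rs ih =>
    obtain ⟨hx, hrs⟩ := (RingTheory.Sequence.isWeaklyRegular_cons_iff _ _ _).1 hrs
    refine subsingleton_ext_left_of_retract (.ofIso
      (Submodule.quotOfListConsSMulTopEquivQuotSMulTopInner M x rs).toModuleIso) ?_
    rw [List.length_cons, ← add_assoc, add_right_comm] at h ⊢
    refine ih hrs fun i hi hi' ↦ ?_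
    obtain ⟨i, rfl⟩ := Nat.exists_eq_add_of_le' (Nat.one_le_of_lt hi)
    exact subsingleton_ext_X₃_left (IsSMulRegular.smulShortComplex_shortExact (M := .of R M) hx)
      (h i (by omega) (by omega)) (h (i + 1) (by omega) hi')

variable [IsLocalRing R]

theorem subsingleton_ext_residueField_of_quotient_smul_top {M : Type u} [AddCommGroup M]
    [Module R M] (hM : (maximalIdeal R • ⊤ : Submodule R M) ≠ ⊤) {i : ℕ}
    (h : Subsingleton (Abelian.Ext
      (ModuleCat.of R (M ⧸ (maximalIdeal R • ⊤ : Submodule R M))) N i)) :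
    Subsingleton (Abelian.Ext (ModuleCat.of R (R ⧸ maximalIdeal R)) N i) := by
  let _ : Field (R ⧸ maximalIdeal R) := Ideal.Quotient.field _
  have := Submodule.Quotient.nontrivial_iff.2 hM
  obtain ⟨y, hy⟩ := exists_ne (0 : M ⧸ (maximalIdeal R • ⊤ : Submodule R M))
  obtain ⟨r, hr⟩ := LinearMap.exists_leftInverse_of_injective
    (LinearMap.toSpanSingleton (R ⧸ maximalIdeal R) _ y) (by rwa [LinearMap.ker_toSpanSingleton])
  refine subsingleton_ext_left_of_retract ⟨ModuleCat.ofHom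
    ((LinearMap.toSpanSingleton (R ⧸ maximalIdeal R) _ y).restrictScalars R),
    ModuleCat.ofHom (r.restrictScalars R), ?_⟩ h
  ext
  exact LinearMap.congr_fun hr 1

variable [IsNoetherianRing R] [Module.Finite R N]

theorem exists_isRegular_of_subsingleton_ext_residueField [Nontrivial N] {n : ℕ}
    (h : ∀ i < n, Subsingleton (Abelian.Ext (ModuleCat.of R (R ⧸ maximalIdeal R)) N i)) :
    ∃ rs : List R, (∀ x ∈ rs, x ∈ maximalIdeal R) ∧ RingTheory.Sequence.IsRegular N rs ∧
      rs.length = n := by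
  induction n generalizing N with
  | zero => exact ⟨[], by simp, .nil R N, rfl⟩
  | succ n ih =>
    have hhom : Subsingleton (R ⧸ maximalIdeal R →ₗ[R] N) :=
      (Abelian.Ext.homEquiv₀.trans ModuleCat.homEquiv).subsingleton_congr.1 (h 0 n.succ_pos)
    obtain ⟨x, hx, hreg⟩ := IsSMulRegular.subsingleton_linearMap_iff.1 hhom
    rw [Ideal.annihilator_quotient] at hx
    have := nontrivial_quotSMulTop_of_mem_maximalIdeal N hx
    obtain ⟨rs, hrs, hregular, hlen⟩ := ih (N := .of R (QuotSMulTop x N)) fun i hi ↦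
      subsingleton_ext_X₃_right hreg.smulShortComplex_shortExact (h _ (by omega)) (h _ (by omega))
    exact ⟨x :: rs, List.forall_mem_cons.2 ⟨hx, hrs⟩, .cons hreg hregular, by simp [hlen]⟩

theorem subsingleton_ext_residueField_of_le {i t : ℕ} (hit : i < t)
    (hi : ¬ Subsingleton (Abelian.Ext (ModuleCat.of R (R ⧸ maximalIdeal R)) N i))
    (ht : Subsingleton (Abelian.Ext (ModuleCat.of R (R ⧸ maximalIdeal R)) N t)) {j : ℕ}
    (hj : t ≤ j) : Subsingleton (Abelian.Ext (ModuleCat.of R (R ⧸ maximalIdeal R)) N j) := by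
  obtain ⟨a, hat, ha, ha'⟩ : ∃ a < t,
      ¬ Subsingleton (Abelian.Ext (ModuleCat.of R (R ⧸ maximalIdeal R)) N a) ∧
      Subsingleton (Abelian.Ext (ModuleCat.of R (R ⧸ maximalIdeal R)) N (a + 1)) := by
    by_contra H
    refine Nat.le_induction (P := fun k _ ↦ k ≤ t → ¬ Subsingleton
      (Abelian.Ext (ModuleCat.of R (R ⧸ maximalIdeal R)) N k)) (fun _ ↦ hi)
      (fun a _ ih hat ha' ↦ H ⟨a, hat, ih (Nat.le_of_lt hat), ha'⟩) t hit.le le_rfl ht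
  induction j, hj using Nat.le_induction with
  | base => exact ht
  | succ j hj ih =>
    obtain ⟨p, rfl⟩ := Nat.exists_eq_add_of_le' (Nat.one_le_of_lt (hat.trans_le hj))
    exact subsingleton_ext_residueField_add_two (by omega) ha ha' ih

end ResidueField

section Depth

variable {R : Type} [CommRing R] {N : Type} [AddCommGroup N] [Module R N]

theorem injDimLT_of_hasInjectiveDimensionLT {n : ℕ}
    (h : HasInjectiveDimensionLT (ModuleCat.of R N) (n + 1)) : InjDimLT R N (n + 1) := by
  intro X i hi
  obtain ⟨i, rfl⟩ := Nat.exists_eq_add_of_le' (Nat.one_le_of_lt hi)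
  exact (extVanish_succ_iff i).2 (HasInjectiveDimensionLT.subsingleton _ (n + 1) _ hi X)

theorem natCast_le_depth_of_subsingleton_ext_residueField [IsLocalRing R] [IsNoetherianRing R]
    [Module.Finite R N] [Nontrivial N] {n : ℕ} (h : ∀ i < n, Subsingleton
      (Abelian.Ext (ModuleCat.of R (R ⧸ maximalIdeal R)) (ModuleCat.of R N) i)) :
    (n : ℕ∞) ≤ depth R N := by
  obtain ⟨rs, hrs, hreg, hlen⟩ :=
    exists_isRegular_of_subsingleton_ext_residueField (N := .of R N) h
  exact le_sSup ⟨rs, hrs, hreg, congrArg Nat.cast hlen⟩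

end Depth

theorem statement2_general (R : Type) [CommRing R] [IsNoetherianRing R] [IsLocalRing R]
    (M : Type) [AddCommGroup M] [Module R M] (rs : List R)
    (hrs : RingTheory.Sequence.IsRegular M rs)
    (hM : (maximalIdeal R • ⊤ : Submodule R M) = Ideal.ofList rs • ⊤)
    (N : Type) [AddCommGroup N] [Module R N] [Module.Finite R N]
    (n : ℕ) (hn : 1 ≤ n) (hdepth : depth R N ≤ ((n + rs.length : ℕ) : ℕ∞))
    (hvan : ∀ i : ℕ, n ≤ i → i ≤ n + rs.length → ExtVanish R M N i) :
    InjDimFinite R N := by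
  have hk : Subsingleton (Abelian.Ext (ModuleCat.of R (R ⧸ maximalIdeal R)) (ModuleCat.of R N)
      (n + rs.length)) := by
    refine subsingleton_ext_residueField_of_quotient_smul_top (hM ▸ hrs.top_ne_smul.symm) ?_
    rw [hM]
    refine subsingleton_ext_quotient_ofList_smul_top hrs.toIsWeaklyRegular fun i hi hi' ↦ ?_
    obtain ⟨i, rfl⟩ := Nat.exists_eq_add_of_le' (hn.trans hi)
    exact (extVanish_succ_iff i).1 (hvan _ hi hi')
  have hk_ge (j : ℕ) (hj : n + rs.length ≤ j) : Subsingleton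
      (Abelian.Ext (ModuleCat.of R (R ⧸ maximalIdeal R)) (ModuleCat.of R N) j) := by
    obtain hN | hN := subsingleton_or_nontrivial N
    · exact subsingleton_ext_right_of_isZero (ModuleCat.isZero_of_subsingleton _)
    obtain ⟨i, hi, hne⟩ : ∃ i < n + rs.length, ¬ Subsingleton
        (Abelian.Ext (ModuleCat.of R (R ⧸ maximalIdeal R)) (ModuleCat.of R N) i) := by
      by_contra! hlow
      refine (Nat.cast_lt.2 (n + rs.length).lt_succ_self).not_ge (le_trans
        (natCast_le_depth_of_subsingleton_ext_residueField (N := N) fun i hi ↦ ?_) hdepth)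
      obtain hi | rfl := Nat.lt_succ_iff_lt_or_eq.1 hi
      exacts [hlow i hi, hk]
    exact subsingleton_ext_residueField_of_le hi hne hk hj
  obtain ⟨t, ht⟩ := Nat.exists_eq_add_of_le' (hn.trans (n.le_add_right rs.length))
  exact ⟨t + 1, injDimLT_of_hasInjectiveDimensionLT
    (hasInjectiveDimensionLT_of_residueField fun j hj ↦ hk_ge j (ht ▸ hj))⟩

theorem statement2 (R : Type) [CommRing R] [IsNoetherianRing R] [IsLocalRing R]
    (M : Type) [AddCommGroup M] [Module R M] [Module.Finite R M]
    (s : ℕ) (hM : IsUlrich R M s)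
    (N : Type) [AddCommGroup N] [Module R N] [Module.Finite R N]
    (n : ℕ) (hn : 1 ≤ n) (hdepth : depth R N ≤ ((n + s : ℕ) : ℕ∞))
    (hvan : ∀ i : ℕ, n ≤ i → i ≤ n + s → ExtVanish R M N i) :
    InjDimFinite R N := by
  obtain ⟨-, -, -, rs, rfl, -, hrs, hM⟩ := hM
  exact statement2_general R M rs hrs hM N n hn hdepth hvan
end

section
/- Let (R, m, k) be a commutative Noetherian local ring and let M be an Ulrich R-module of dimension s. Then M is (s+1)-Tor-rigid-test: for every finitely generated R-module N, if Tor_i^R(M, N) = 0 for all n ≤ i ≤ n+s for some integer n ≥ 1, then Tor_i^R(M, N) = 0 for all i ≥ n+s and pd_R N < n+s; in particular, if Tor_i^R(M, N) = 0 for all sufficiently large i, then pd_R N is finite. -/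
open CategoryTheory IsLocalRing

/-!
Each regular element `x` on `A` turns two consecutive vanishing `Tor(A, N)` into one vanishing
`Tor(A/xA, N)`. Running through the regular sequence, `s + 1` consecutive vanishing `Tor(M, N)`
give `Tor_{n+s}(M/mM, N) = 0`, because `mM = (x₁, …, x_s)M`. As `M/mM` is a nonzero `k`-vector
space, `k` is a retract of it, so `Tor_{n+s}(k, N) = 0`.

Let `d : F_{n+s} → F_{n+s-1}` be the differential of a resolution of `N` by finite free modules.
The inclusion of its image stays injective after tensoring with `k`, so it splits, and hence `d` has
a generalized inverse `t`, that is, `d t d = d`. Exactness then yields a contracting homotopy of the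
resolution in all degrees from `n + s` on, which kills every `Tor` and `Ext` there.
-/

open Limits

universe u

section FiniteResolution

variable {R : Type u} [CommRing R]

lemma exists_epi_of_fin_free (N : FGModuleCat.{u} R) :
    ∃ (n : ℕ) (f : FGModuleCat.of R (Fin n → R) ⟶ N), Epi f := by
  obtain ⟨n, f, hf⟩ := Module.Finite.exists_fin' R N
  refine ⟨n, FGModuleCat.ofHom f, (forget₂ (FGModuleCat R) (ModuleCat R)).epi_of_epi_map ?_⟩
  exact (ModuleCat.epi_iff_surjective _).2 hf

lemma projective_forget_fin_free (n : ℕ) : Projective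
    ((forget₂ (FGModuleCat R) (ModuleCat R)).obj (FGModuleCat.of R (Fin n → R))) :=
  ModuleCat.projective_of_free (Pi.basisFun R (Fin n))

instance enoughProjectives_fgModuleCat : EnoughProjectives (FGModuleCat.{u} R) where
  presentation N := by
    obtain ⟨n, f, hf⟩ := exists_epi_of_fin_free N
    have := (forget₂ (FGModuleCat R) (ModuleCat R)).projective_of_map_projective
      (projective_forget_fin_free n)
    exact ⟨{ p := FGModuleCat.of R (Fin n → R), f := f }⟩

instance preservesProjectiveObjects_forget_fgModuleCat :
    (forget₂ (FGModuleCat R) (ModuleCat.{u} R)).PreservesProjectiveObjects where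
  projective_obj {X} hX := by
    obtain ⟨n, f, hf⟩ := exists_epi_of_fin_free X
    have := projective_forget_fin_free (R := R) n
    let r : Retract X (FGModuleCat.of R (Fin n → R)) :=
      ⟨Projective.factorThru (𝟙 X) f, f, by simp⟩
    exact (r.map (forget₂ (FGModuleCat R) (ModuleCat R))).projective

theorem exists_projectiveResolution_finite [IsNoetherianRing R] (N : ModuleCat.{u} R)
    [Module.Finite R N] :
    ∃ P : ProjectiveResolution N, ∀ i, Module.Finite R (P.complex.X i) :=
  let P := projectiveResolution (FGModuleCat.of R N)
  ⟨(forget₂ (FGModuleCat R) (ModuleCat R)).mapProjectiveResolution P,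
    fun i => (P.complex.X i).property⟩

end FiniteResolution

section GeneralizedInverse

variable {R : Type*} [CommRing R] {X Y Z : Type*} [AddCommGroup X] [AddCommGroup Y]
  [AddCommGroup Z] [Module R X] [Module R Y] [Module R Z]

lemma exists_generalizedInverse_of_split_range [Module.Projective R Y] {f : X →ₗ[R] Y}
    (hf : ∃ r, r ∘ₗ f.range.subtype = .id) : ∃ t : Y →ₗ[R] X, f ∘ₗ t ∘ₗ f = f := by
  obtain ⟨r, hr⟩ := hf
  obtain ⟨t, ht⟩ := Module.projective_lifting_property f.rangeRestrict r f.surjective_rangeRestrict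
  refine ⟨t, LinearMap.ext fun x => ?_⟩
  have hrx : r (f x) = ⟨f x, x, rfl⟩ := LinearMap.congr_fun hr ⟨f x, x, rfl⟩
  have htx : f (t (f x)) = r (f x) := congrArg Subtype.val (LinearMap.congr_fun ht (f x))
  simp [htx, hrx]

lemma exists_homotopy_of_generalizedInverse [Module.Projective R Y] {f : X →ₗ[R] Y}
    {g : Y →ₗ[R] Z} (hfg : Function.Exact f g) {t : Z →ₗ[R] Y} (ht : g ∘ₗ t ∘ₗ g = g) :
    ∃ s : Y →ₗ[R] X, f ∘ₗ s + t ∘ₗ g = .id := by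
  have hker : ∀ y, ((LinearMap.id : Y →ₗ[R] Y) - t ∘ₗ g) y ∈ LinearMap.range f := fun y => by
    have : g (t (g y)) = g y := LinearMap.congr_fun ht y
    exact (hfg _).1 (by simp [this])
  obtain ⟨s, hs⟩ := Module.projective_lifting_property f.rangeRestrict
    ((LinearMap.id - t ∘ₗ g).codRestrict _ hker) f.surjective_rangeRestrict
  refine ⟨s, LinearMap.ext fun y => ?_⟩
  have hsy : f (s y) = y - t (g y) := congrArg Subtype.val (LinearMap.congr_fun hs y)
  simp [hsy]

lemma generalizedInverse_of_homotopy {f : X →ₗ[R] Y} {g : Y →ₗ[R] Z} (hfg : g ∘ₗ f = 0)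
    {s : Y →ₗ[R] X} {t : Z →ₗ[R] Y} (h : f ∘ₗ s + t ∘ₗ g = .id) : f ∘ₗ s ∘ₗ f = f := by
  simpa [LinearMap.add_comp, LinearMap.comp_assoc, hfg] using congr($h ∘ₗ f)

lemma exact_lTensor_of_homotopy (A : Type*) [AddCommGroup A] [Module R A]
    {f : X →ₗ[R] Y} {g : Y →ₗ[R] Z} (hfg : g ∘ₗ f = 0)
    {s : Y →ₗ[R] X} {t : Z →ₗ[R] Y} (h : f ∘ₗ s + t ∘ₗ g = .id) :
    Function.Exact (f.lTensor A) (g.lTensor A) := by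
  refine LinearMap.exact_of_comp_eq_zero_of_ker_le_range ?_ fun y hy => ⟨s.lTensor A y, ?_⟩
  · rw [← LinearMap.lTensor_comp, hfg, LinearMap.lTensor_zero]
  · simpa [LinearMap.lTensor_add, LinearMap.lTensor_comp, LinearMap.mem_ker.1 hy] using
      congr(LinearMap.lTensor A $h y)

lemma injective_lTensor_subtype_range_of_exact (A : Type*) [AddCommGroup A] [Module R A]
    {f : X →ₗ[R] Y} {g : Y →ₗ[R] Z} (hfg : Function.Exact f g)
    (h : Function.Exact (f.lTensor A) (g.lTensor A)) :
    Function.Injective (g.range.subtype.lTensor A) := by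
  have hp : Function.Exact f g.rangeRestrict := fun y => by
    rw [← hfg y, Subtype.ext_iff]; rfl
  have hpA := lTensor_exact A hp g.surjective_rangeRestrict
  rw [injective_iff_map_eq_zero]
  intro z hz
  obtain ⟨y, rfl⟩ := LinearMap.lTensor_surjective A g.surjective_rangeRestrict z
  refine (hpA y).2 ((h y).1 ?_)
  rwa [← LinearMap.lTensor_comp_apply] at hz

lemma exists_generalizedInverse_of_exact_lTensor_residueField [IsLocalRing R]
    [Module.Finite R Y] [Module.Finite R Z] [Module.Free R Z]
    {f : X →ₗ[R] Y} {g : Y →ₗ[R] Z} (hfg : Function.Exact f g)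
    (h : Function.Exact (f.lTensor (ResidueField R)) (g.lTensor (ResidueField R))) :
    ∃ t : Z →ₗ[R] Y, g ∘ₗ t ∘ₗ g = g :=
  exists_generalizedInverse_of_split_range <|
    (IsLocalRing.split_injective_iff_lTensor_residueField_injective _).2 <|
      injective_lTensor_subtype_range_of_exact _ hfg h

lemma quotSMulTopTensorEquivQuotSMulTop_naturality (A : Type*) [AddCommGroup A] [Module R A]
    (x : R) (f : X →ₗ[R] Y) :
    QuotSMulTop.map x (f.lTensor A) ∘ₗ
        (QuotSMulTop.quotSMulTopTensorEquivQuotSMulTop x X A).toLinearMap =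
      (QuotSMulTop.quotSMulTopTensorEquivQuotSMulTop x Y A).toLinearMap ∘ₗ
        f.lTensor (QuotSMulTop x A) := by
  ext a y
  rfl

lemma exact_lTensor_quotSMulTop {A W : Type*} [AddCommGroup A] [Module R A]
    [AddCommGroup W] [Module R W] [Module.Flat R Z] {x : R} (hx : IsSMulRegular A x)
    {f : W →ₗ[R] X} {g : X →ₗ[R] Y} {h : Y →ₗ[R] Z}
    (hfg : Function.Exact (f.lTensor A) (g.lTensor A))
    (hgh : Function.Exact (g.lTensor A) (h.lTensor A)) :
    Function.Exact (f.lTensor (QuotSMulTop x A)) (g.lTensor (QuotSMulTop x A)) :=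
  (Function.Exact.iff_of_ladder_linearEquiv
    (quotSMulTopTensorEquivQuotSMulTop_naturality A x f)
    (quotSMulTopTensorEquivQuotSMulTop_naturality A x g)).1 <|
      QuotSMulTop.map_first_exact_on_four_term_exact_of_isSMulRegular_last hfg hgh (hx.rTensor Z)

end GeneralizedInverse

section Resolution

variable {R : Type u} [CommRing R] {N : ModuleCat.{u} R} (P : ProjectiveResolution N)

lemma exact_d (i : ℕ) :
    Function.Exact (P.complex.d (i + 2) (i + 1)).hom (P.complex.d (i + 1) i).hom :=
  (ShortComplex.ShortExact.moduleCat_exact_iff_function_exact _).1 (P.exact_succ i)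

instance moduleProjective_X (i : ℕ) : Module.Projective R (P.complex.X i) :=
  (IsProjective.iff_projective _).2 (P.projective i)

lemma isZero_tor_succ_iff (A : ModuleCat.{u} R) (i : ℕ) :
    IsZero (((Tor (ModuleCat R) (i + 1)).obj A).obj N) ↔
      Function.Exact ((P.complex.d (i + 2) (i + 1)).hom.lTensor A)
        ((P.complex.d (i + 1) i).hom.lTensor A) := by
  rw [Tor_obj, (P.isoLeftDerivedObj ((MonoidalCategory.tensoringLeft _).obj A) (i + 1)).isZero_iff]
  refine (HomologicalComplex.exactAt_iff_isZero_homology _ _).symm.trans ?_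
  rw [HomologicalComplex.exactAt_iff' _ (i + 2) (i + 1) i (by simp) (by simp)]
  exact ShortComplex.ShortExact.moduleCat_exact_iff_function_exact _

lemma isZero_ext_succ_iff (Y : ModuleCat.{u} R) (i : ℕ) :
    IsZero (((Ext R (ModuleCat R) (i + 1)).obj (Opposite.op N)).obj Y) ↔
      ∀ f : P.complex.X (i + 1) ⟶ Y, P.complex.d (i + 2) (i + 1) ≫ f = 0 →
        ∃ g, P.complex.d (i + 1) i ≫ g = f := by
  rw [(P.isoExt (R := R) (i + 1) Y).isZero_iff]
  refine (HomologicalComplex.exactAt_iff_isZero_homology _ _).symm.trans ?_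
  rw [HomologicalComplex.exactAt_iff' _ i (i + 1) (i + 2) (by simp) (by simp)]
  exact ShortComplex.moduleCat_exact_iff _

lemma exists_homotopy_of_le {i j : ℕ} (hij : i ≤ j)
    (hi : ∃ t, (P.complex.d (i + 1) i).hom ∘ₗ t ∘ₗ (P.complex.d (i + 1) i).hom =
      (P.complex.d (i + 1) i).hom) :
    ∃ s t, (P.complex.d (j + 2) (j + 1)).hom ∘ₗ s + t ∘ₗ (P.complex.d (j + 1) j).hom = .id := by
  induction j, hij using Nat.le_induction with
  | base =>
    obtain ⟨t, ht⟩ := hi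
    obtain ⟨s, hst⟩ := exists_homotopy_of_generalizedInverse (exact_d P i) ht
    exact ⟨s, t, hst⟩
  | succ j _ ih =>
    obtain ⟨s, t, hst⟩ := ih
    have hs := generalizedInverse_of_homotopy (exact_d P j).linearMap_comp_eq_zero hst
    obtain ⟨s', hs'⟩ := exists_homotopy_of_generalizedInverse (exact_d P (j + 1)) hs
    exact ⟨s', s, hs'⟩

lemma exists_homotopy_of_isZero_tor_residueField [IsLocalRing R]
    [∀ i, Module.Finite R (P.complex.X i)] {i j : ℕ} (hij : i ≤ j)
    (h : IsZero (((Tor (ModuleCat R) (i + 1)).obj (ModuleCat.of R (ResidueField R))).obj N)) :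
    ∃ s t, (P.complex.d (j + 2) (j + 1)).hom ∘ₗ s + t ∘ₗ (P.complex.d (j + 1) j).hom = .id := by
  have : Module.Free R (P.complex.X i) := Module.free_of_flat_of_isLocalRing
  exact exists_homotopy_of_le P hij <|
    exists_generalizedInverse_of_exact_lTensor_residueField (exact_d P i) <|
      (isZero_tor_succ_iff P _ i).1 h

end Resolution

section Tor

variable {R : Type u} [CommRing R] {N : ModuleCat.{u} R}

theorem isZero_tor_of_isZero_tor_residueField [IsNoetherianRing R] [IsLocalRing R]
    [Module.Finite R N] (A : ModuleCat.{u} R) {i j : ℕ} (hij : i + 1 ≤ j)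
    (h : IsZero (((Tor (ModuleCat R) (i + 1)).obj (ModuleCat.of R (ResidueField R))).obj N)) :
    IsZero (((Tor (ModuleCat R) j).obj A).obj N) := by
  obtain ⟨P, _⟩ := exists_projectiveResolution_finite N
  obtain ⟨j, rfl⟩ := Nat.exists_eq_add_of_le' (Nat.le_of_add_left_le hij)
  obtain ⟨s, t, hst⟩ := exists_homotopy_of_isZero_tor_residueField P (Nat.le_of_succ_le_succ hij) h
  exact (isZero_tor_succ_iff P A j).2 <|
    exact_lTensor_of_homotopy A (exact_d P j).linearMap_comp_eq_zero hst

theorem isZero_ext_of_isZero_tor_residueField [IsNoetherianRing R] [IsLocalRing R]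
    [Module.Finite R N] (Y : ModuleCat.{u} R) {i j : ℕ} (hij : i + 1 ≤ j)
    (h : IsZero (((Tor (ModuleCat R) (i + 1)).obj (ModuleCat.of R (ResidueField R))).obj N)) :
    IsZero (((Ext R (ModuleCat R) j).obj (Opposite.op N)).obj Y) := by
  obtain ⟨P, _⟩ := exists_projectiveResolution_finite N
  obtain ⟨j, rfl⟩ := Nat.exists_eq_add_of_le' (Nat.le_of_add_left_le hij)
  obtain ⟨s, t, hst⟩ := exists_homotopy_of_isZero_tor_residueField P (Nat.le_of_succ_le_succ hij) h
  refine (isZero_ext_succ_iff P Y j).2 fun f hf => ⟨ModuleCat.ofHom (f.hom ∘ₗ t), ?_⟩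
  have hfd : f.hom ∘ₗ (P.complex.d (j + 2) (j + 1)).hom = 0 := congr(($hf).hom)
  ext1
  calc (f.hom ∘ₗ t) ∘ₗ (P.complex.d (j + 1) j).hom
    _ = f.hom ∘ₗ ((P.complex.d (j + 2) (j + 1)).hom ∘ₗ s + t ∘ₗ (P.complex.d (j + 1) j).hom) := by
      rw [LinearMap.comp_add, ← LinearMap.comp_assoc, hfd, LinearMap.zero_comp, zero_add,
        LinearMap.comp_assoc]
    _ = f.hom := by rw [hst, LinearMap.comp_id]

lemma isZero_tor_of_retract {A B : ModuleCat.{u} R} (r : Retract A B) {i : ℕ}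
    (h : IsZero (((Tor (ModuleCat R) i).obj B).obj N)) :
    IsZero (((Tor (ModuleCat R) i).obj A).obj N) :=
  .of_mono (r.map ((Tor (ModuleCat R) i).flip.obj N)).i h

lemma isZero_tor_residueField_of_nontrivial [IsLocalRing R] {V : Type u} [AddCommGroup V]
    [Module R V] [Module (ResidueField R) V] [IsScalarTower R (ResidueField R) V] [Nontrivial V]
    {i : ℕ} (h : IsZero (((Tor (ModuleCat R) i).obj (ModuleCat.of R V)).obj N)) :
    IsZero (((Tor (ModuleCat R) i).obj (ModuleCat.of R (ResidueField R))).obj N) := by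
  obtain ⟨v, hv⟩ := exists_ne (0 : V)
  obtain ⟨g, hg⟩ := LinearMap.exists_leftInverse_of_injective _
    (LinearMap.ker_toSpanSingleton (ResidueField R) hv)
  refine isZero_tor_of_retract ⟨ModuleCat.ofHom
    ((LinearMap.toSpanSingleton (ResidueField R) V v).restrictScalars R),
    ModuleCat.ofHom (g.restrictScalars R), ?_⟩ h
  ext x
  exact LinearMap.congr_fun hg x

lemma isZero_tor_quotSMulTop {A : Type u} [AddCommGroup A] [Module R A] {x : R}
    (hx : IsSMulRegular A x) {i : ℕ}
    (h₁ : IsZero (((Tor (ModuleCat R) (i + 1)).obj (ModuleCat.of R A)).obj N))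
    (h₂ : IsZero (((Tor (ModuleCat R) (i + 2)).obj (ModuleCat.of R A)).obj N)) :
    IsZero (((Tor (ModuleCat R) (i + 2)).obj (ModuleCat.of R (QuotSMulTop x A))).obj N) := by
  let P := projectiveResolution N
  rw [isZero_tor_succ_iff P] at h₁ h₂ ⊢
  exact exact_lTensor_quotSMulTop hx h₂ h₁

theorem isZero_tor_quot_ofList_smul_top {A : Type u} [AddCommGroup A] [Module R A] {rs : List R}
    (hrs : RingTheory.Sequence.IsWeaklyRegular A rs) {n : ℕ}
    (h : ∀ i, n + 1 ≤ i → i ≤ n + 1 + rs.length →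
      IsZero (((Tor (ModuleCat R) i).obj (ModuleCat.of R A)).obj N)) :
    IsZero (((Tor (ModuleCat R) (n + 1 + rs.length)).obj
      (ModuleCat.of R (A ⧸ (Ideal.ofList rs • ⊤ : Submodule R A)))).obj N) := by
  induction hrs generalizing n with
  | @nil A =>
    let e := Submodule.quotEquivOfEqBot (Ideal.ofList ([] : List R) • ⊤ : Submodule R A)
      (by rw [Ideal.ofList_nil, Submodule.bot_smul])
    exact isZero_tor_of_retract (.ofIso e.toModuleIso) (h _ le_rfl le_rfl)
  | @cons A _ _ x rs hx _ ih =>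
    let e := Submodule.quotOfListConsSMulTopEquivQuotSMulTopInner A x rs
    have hlength : n + 1 + (x :: rs).length = n + 1 + 1 + rs.length := by
      rw [List.length_cons]; omega
    rw [hlength] at h ⊢
    refine isZero_tor_of_retract (.ofIso e.toModuleIso) (ih fun i hi hi' => ?_)
    obtain ⟨i, rfl⟩ := Nat.exists_eq_add_of_le' (show 2 ≤ i by omega)
    exact isZero_tor_quotSMulTop hx (h _ (by omega) (by omega)) (h _ (by omega) (by omega))

end Tor

section Ulrich

variable {R : Type u} [CommRing R] [IsLocalRing R] {N : ModuleCat.{u} R}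

theorem isZero_tor_residueField_of_isRegular {M : Type u} [AddCommGroup M]
    [Module R M] {rs : List R} (hreg : RingTheory.Sequence.IsRegular M rs)
    (hm : maximalIdeal R • (⊤ : Submodule R M) = Ideal.ofList rs • ⊤) {n : ℕ}
    (h : ∀ i, n + 1 ≤ i → i ≤ n + 1 + rs.length →
      IsZero (((Tor (ModuleCat R) i).obj (ModuleCat.of R M)).obj N)) :
    IsZero (((Tor (ModuleCat R) (n + 1 + rs.length)).obj
      (ModuleCat.of R (ResidueField R))).obj N) := by
  have : Nontrivial (M ⧸ (maximalIdeal R • ⊤ : Submodule R M)) :=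
    Submodule.Quotient.nontrivial_iff.2 (hm ▸ hreg.top_ne_smul.symm)
  let : Module (ResidueField R) (M ⧸ (maximalIdeal R • ⊤ : Submodule R M)) :=
    inferInstanceAs (Module (R ⧸ maximalIdeal R) _)
  have : IsScalarTower R (ResidueField R) (M ⧸ (maximalIdeal R • ⊤ : Submodule R M)) :=
    inferInstanceAs (IsScalarTower R (R ⧸ maximalIdeal R) _)
  have htor := isZero_tor_quot_ofList_smul_top hreg.toIsWeaklyRegular h
  exact isZero_tor_residueField_of_nontrivial (hm ▸ htor)

theorem statement4_general [IsNoetherianRing R] (M : Type u) [AddCommGroup M] [Module R M]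
    (rs : List R) (hreg : RingTheory.Sequence.IsRegular M rs)
    (hm : maximalIdeal R • (⊤ : Submodule R M) = Ideal.ofList rs • ⊤) :
    (∀ N : ModuleCat.{u} R, Module.Finite R N → ∀ n : ℕ, 1 ≤ n →
      (∀ i, n ≤ i → i ≤ n + rs.length →
        IsZero (((Tor (ModuleCat R) i).obj (ModuleCat.of R M)).obj N)) →
      (∀ i, n + rs.length ≤ i → IsZero (((Tor (ModuleCat R) i).obj (ModuleCat.of R M)).obj N)) ∧
      ∀ (Y : ModuleCat.{u} R) (i : ℕ), n + rs.length ≤ i →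
        IsZero (((Ext R (ModuleCat R) i).obj (Opposite.op N)).obj Y)) ∧
    ∀ N : ModuleCat.{u} R, Module.Finite R N →
      (∃ n₀ : ℕ, ∀ i, n₀ ≤ i → IsZero (((Tor (ModuleCat R) i).obj (ModuleCat.of R M)).obj N)) →
      ∃ n : ℕ, ∀ (Y : ModuleCat.{u} R) (i : ℕ), n ≤ i →
        IsZero (((Ext R (ModuleCat R) i).obj (Opposite.op N)).obj Y) := by
  rw [and_iff_left_of_imp fun rigid N hN ⟨n₀, h⟩ =>
    ⟨_, (rigid N hN (n₀ + 1) (Nat.le_add_left 1 n₀) fun i hi _ => h i (Nat.le_of_lt hi)).2⟩]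
  intro N hN n hn h
  obtain ⟨n, rfl⟩ := Nat.exists_eq_add_of_le' hn
  have hk := isZero_tor_residueField_of_isRegular hreg hm h
  rw [Nat.add_right_comm] at hk ⊢
  exact ⟨fun i hi => isZero_tor_of_isZero_tor_residueField _ hi hk,
    fun Y i hi => isZero_ext_of_isZero_tor_residueField Y hi hk⟩

end Ulrich

theorem statement4 (R : Type) [CommRing R] [IsNoetherianRing R] [IsLocalRing R]
    (M : Type) [AddCommGroup M] [Module R M] [Module.Finite R M]
    (s : ℕ) (hM : IsUlrich R M s) :
    (∀ (N : ModuleCat R), Module.Finite R N → ∀ n : ℕ, 1 ≤ n →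
      (∀ i : ℕ, n ≤ i → i ≤ n + s → TorVanish R M N i) →
        (∀ i : ℕ, n + s ≤ i → TorVanish R M N i) ∧ ProjDimLT R N (n + s)) ∧
    (∀ (N : ModuleCat R), Module.Finite R N →
      (∃ n₀ : ℕ, ∀ i : ℕ, n₀ ≤ i → TorVanish R M N i) → ProjDimFinite R N) := by
  obtain ⟨-, -, -, rs, rfl, -, hreg, hm⟩ := hM
  simpa only [TorVanish, ProjDimLT, ProjDimFinite, ExtVanish, ← ModuleCat.isZero_iff_subsingleton]
    using statement4_general M rs hreg hm
end

section
/- Let (R, m) be a reduced commutative Noetherian local ring which is not an integral domain. Then the set Min(R) of minimal primes of R has more than one element; moreover, for any non-empty proper subset S ⊊ Min(R), setting I = ∩_{p ∈ S} p and J = ∩_{q ∈ Min(R)∖S} q, the ideals I and J are nonzero proper ideals of R, I ∩ J = 0, and both R/I and R/J have positive depth. -/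
open CategoryTheory IsLocalRing

/-! Over a radical ideal `I` the minimal primes intersect in `I`, so an `I` that is neither prime
nor the unit ideal has at least two of them, and any partition of them into two parts splits `I` as
an intersection. When there are finitely many, a prime containing an intersection of some of them
contains one of those, so the intersection of a proper subset is strictly larger than `I`. In a
local ring with several minimal primes the maximal ideal is not minimal, and prime avoidance gives
an element of it outside every minimal prime; such an element is regular modulo any intersection
of minimal primes. -/

section MinimalPrimes

variable {R : Type*} [CommSemiring R] {I : Ideal R} {S : Set (Ideal R)}

theorem sInf_le_iff_exists_le_of_isPrime (hfin : S.Finite) {q : Ideal R} (hq : q.IsPrime) :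
    sInf S ≤ q ↔ ∃ p ∈ S, p ≤ q := by
  rw [← hfin.coe_toFinset, ← Finset.inf_id_eq_sInf, hq.inf_le']
  rfl

theorem sInf_ne_top_of_forall_isPrime (hprime : ∀ p ∈ S, p.IsPrime) (hS : S.Nonempty) :
    sInf S ≠ ⊤ := by
  obtain ⟨p, hp⟩ := hS
  exact ne_top_of_le_ne_top (hprime p hp).ne_top (sInf_le hp)

theorem lt_sInf_of_ssubset_minimalPrimes (hfin : S.Finite) (hS : S ⊂ I.minimalPrimes) :
    I < sInf S := by
  refine lt_of_le_not_ge (le_sInf fun p hp => (hS.subset hp).le) fun hle => ?_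
  obtain ⟨q, hq, hqS⟩ := Set.exists_of_ssubset hS
  obtain ⟨p, hp, hpq⟩ :=
    (sInf_le_iff_exists_le_of_isPrime hfin hq.isPrime).mp (hle.trans hq.le)
  have hp_eq : p = q := hpq.antisymm (hq.2 (hS.subset hp).1 hpq)
  exact hqS (hp_eq ▸ hp)

theorem sInf_inf_sInf_minimalPrimes_sdiff (hS : S ⊆ I.minimalPrimes) :
    sInf S ⊓ sInf (I.minimalPrimes \ S) = I.radical := by
  rw [← sInf_union, Set.union_sdiff_cancel hS, Ideal.sInf_minimalPrimes]

theorem minimalPrimes_nontrivial_of_isRadical (hI : I.IsRadical) (htop : I ≠ ⊤)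
    (hprime : ¬ I.IsPrime) : I.minimalPrimes.Nontrivial := by
  obtain ⟨p, hp⟩ := Set.nonempty_coe_sort.mp (Ideal.nonempty_minimalPrimes htop)
  by_contra hsub
  have hsingle : I.minimalPrimes = {p} :=
    (Set.not_nontrivial_iff.mp hsub).eq_singleton_of_mem hp
  have hpI : p = I := by
    rw [← sInf_singleton (a := p), ← hsingle, Ideal.sInf_minimalPrimes, hI.radical]
  exact hprime (hpI ▸ hp.isPrime)

theorem not_maximalIdeal_le_of_mem_minimalPrimes [IsLocalRing R]
    (hI : I.minimalPrimes.Nontrivial) {p : Ideal R} (hp : p ∈ I.minimalPrimes) :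
    ¬ maximalIdeal R ≤ p := by
  intro hle
  obtain ⟨q, hq, hqp⟩ := hI.exists_ne p
  have hqp_le : q ≤ p := (le_maximalIdeal hq.isPrime.ne_top).trans hle
  exact hqp (hqp_le.antisymm (hp.2 hq.1 hqp_le))

end MinimalPrimes

section Regular

variable {R : Type*} [CommRing R] {S : Set (Ideal R)}

theorem isSMulRegular_quotient_sInf_of_forall_notMem (hprime : ∀ p ∈ S, p.IsPrime) {x : R}
    (hx : ∀ p ∈ S, x ∉ p) : IsSMulRegular (R ⧸ sInf S) x := by
  refine (isSMulRegular_quotient_iff_mem_of_smul_mem _ x).mpr fun y hxy => ?_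
  rw [Submodule.mem_sInf] at hxy ⊢
  exact fun p hp => ((hprime p hp).mem_or_mem (hxy p hp)).resolve_left (hx p hp)

theorem exists_mem_isSMulRegular_quotient_sInf (hfin : S.Finite) (hprime : ∀ p ∈ S, p.IsPrime)
    {J : Ideal R} (hJ : ∀ p ∈ S, ¬ J ≤ p) : ∃ x ∈ J, IsSMulRegular (R ⧸ sInf S) x := by
  have havoid : ¬ (J : Set R) ⊆ ⋃ p ∈ S, p := by
    intro hcover
    obtain ⟨p, hp, hle⟩ := (Ideal.subset_union_prime_finite hfin (f := id) ⊥ ⊥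
      fun p hp _ _ => hprime p hp).mp hcover
    exact hJ p hp hle
  obtain ⟨x, hxJ, hxS⟩ := Set.not_subset.mp havoid
  exact ⟨x, hxJ, isSMulRegular_quotient_sInf_of_forall_notMem hprime fun p hp hxp =>
    hxS (Set.mem_biUnion hp hxp)⟩

end Regular

theorem statement7_general (R : Type*) [CommRing R] [IsLocalRing R] [IsReduced R]
    (hfin : (minimalPrimes R).Finite) (hnd : ¬ IsDomain R) :
    (minimalPrimes R).Nontrivial ∧
    ∀ S : Set (Ideal R), S ⊆ minimalPrimes R → S.Nonempty → S ≠ minimalPrimes R →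
      (sInf S ≠ ⊥ ∧ sInf S ≠ ⊤) ∧
      (sInf (minimalPrimes R \ S) ≠ ⊥ ∧ sInf (minimalPrimes R \ S) ≠ ⊤) ∧
      sInf S ⊓ sInf (minimalPrimes R \ S) = ⊥ ∧
      (∃ x ∈ maximalIdeal R, IsSMulRegular (R ⧸ sInf S) x) ∧
      (∃ x ∈ maximalIdeal R, IsSMulRegular (R ⧸ sInf (minimalPrimes R \ S)) x) := by
  have hrad : (⊥ : Ideal R).IsRadical := Ideal.isRadical_bot
  have hnt : (minimalPrimes R).Nontrivial :=
    minimalPrimes_nontrivial_of_isRadical hrad bot_ne_top fun _ => hnd (IsDomain.of_bot_isPrime R)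
  have hprime (T : Set (Ideal R)) (hT : T ⊆ minimalPrimes R) : ∀ p ∈ T, p.IsPrime :=
    fun p hp => (hT hp).isPrime
  have hproper (T : Set (Ideal R)) (hT : T ⊂ minimalPrimes R) (hTne : T.Nonempty) :
      sInf T ≠ ⊥ ∧ sInf T ≠ ⊤ :=
    ⟨(lt_sInf_of_ssubset_minimalPrimes (hfin.subset hT.subset) hT).ne',
      sInf_ne_top_of_forall_isPrime (hprime T hT.subset) hTne⟩
  have hdepth (T : Set (Ideal R)) (hT : T ⊆ minimalPrimes R) :
      ∃ x ∈ maximalIdeal R, IsSMulRegular (R ⧸ sInf T) x :=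
    exists_mem_isSMulRegular_quotient_sInf (hfin.subset hT) (hprime T hT) fun _ hp =>
      not_maximalIdeal_le_of_mem_minimalPrimes hnt (hT hp)
  refine ⟨hnt, fun S hS hSne hSall => ?_⟩
  have hSlt : S ⊂ minimalPrimes R := hS.ssubset_of_ne hSall
  have hdiff : minimalPrimes R \ S ⊂ minimalPrimes R := hS.sdiff_ssubset_of_nonempty hSne
  exact ⟨hproper S hSlt hSne, hproper _ hdiff (Set.nonempty_of_ssubset hSlt),
    (sInf_inf_sInf_minimalPrimes_sdiff hS).trans hrad.radical, hdepth S hS, hdepth _ hdiff.subset⟩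

theorem statement7 (R : Type) [CommRing R] [IsNoetherianRing R] [IsLocalRing R]
    [IsReduced R] (hnd : ¬ IsDomain R) :
    (minimalPrimes R).Nontrivial ∧
    ∀ S : Set (Ideal R), S ⊆ minimalPrimes R → S.Nonempty → S ≠ minimalPrimes R →
      (sInf S ≠ ⊥ ∧ sInf S ≠ ⊤) ∧
      (sInf (minimalPrimes R \ S) ≠ ⊥ ∧ sInf (minimalPrimes R \ S) ≠ ⊤) ∧
      sInf S ⊓ sInf (minimalPrimes R \ S) = ⊥ ∧
      (∃ x ∈ maximalIdeal R, IsSMulRegular (R ⧸ sInf S) x) ∧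
      (∃ x ∈ maximalIdeal R, IsSMulRegular (R ⧸ sInf (minimalPrimes R \ S)) x) :=
  statement7_general R (minimalPrimes.finite_of_isNoetherianRing R) hnd
end
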